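/- arXiv:2403.02964 — 2 statements merged into one kernel-verified Lean document; each statement's English description precedes it below -/
import Mathlib

section
/- Given ρ₀ > 0 and continuous functions φ₊, φ₋ : (0, ρ₀] → ℝ that extend continuously to [0, ρ₀] and satisfy 0 < Θ(r) := φ₋(r) − φ₊(r) ≤ 2π for all r ∈ (0, ρ₀], let Ω = {r e^{iθ} : 0 < r < ρ₀, φ₊(r) < θ < φ₋(r)} ⊂ ℂ be the associated polar domain. Let 0 < α ≤ 2, γ ∈ (0,1], C₁ > 0, and assume in addition that Θ(r) ≤ πα(1 + C₁ r^γ) for all r ∈ (0, ρ₀]. Let 0 < r₀ < ρ₀. Suppose u : ℂ → ℝ is harmonic on Ω, u(z) ≤ 1 for all z ∈ Ω, and for every boundary point ζ ∈ ∂Ω with |ζ| > r₀ one has limsup_{Ω ∋ z → ζ} u(z) ≤ 0. Then for every z ∈ Ω with |z| > r₀, u(z) ≤ (8/π)(r₀/|z|)^{1/α}(1 + C₁|z|^γ)^{1/(αγ)}. -/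
open Set

/-- `u : ℂ → ℝ` is harmonic on an open set `U ⊂ ℂ`: it is twice continuously
differentiable on `U` and its Laplacian `∂²u/∂x² + ∂²u/∂y²` vanishes on `U`. -/
def HarmonicOnSet (u : ℂ → ℝ) (U : Set ℂ) : Prop :=
  ContDiffOn ℝ 2 u U ∧
    ∀ z ∈ U,
      iteratedFDeriv ℝ 2 u z ![1, 1] + iteratedFDeriv ℝ 2 u z ![Complex.I, Complex.I] = 0

/-- The polar domain `{r e^{iθ} : 0 < r < ρ₀, φ₊(r) < θ < φ₋(r)}`. -/
def polarDomain (ρ₀ : ℝ) (φp φm : ℝ → ℝ) : Set ℂ :=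
  {z | ∃ r θ : ℝ, 0 < r ∧ r < ρ₀ ∧ φp r < θ ∧ θ < φm r ∧
      z = (r : ℂ) * Complex.exp (θ * Complex.I)}

/-!
In the coordinate `log z` the polar domain becomes a strip-like region whose slice at abscissa `t`
has length `Θ (exp t) ≤ π a(t)`. A smooth convex truncation of `u`, extended by `0`, becomes there a
subharmonic function with values in `[0, 1]`. By Carleman's method Wirtinger's inequality shows that
its slice energy `A t = ∫ w (t + i y) ^ 2 dy` satisfies `0 ≤ A'' + (2 / a) A'`, so that `A` is
dominated by the explicit solution of the corresponding equation, of size `exp (-2 ∫ dx / a)`. The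
value of `w` at a point is recovered from its energies on two neighbouring slices: the mean value
inequality on the disc, transplanted to the strip between the slices, followed by Cauchy–Schwarz.
The constant `8 / π` is the result of this last step; the power law is the value of `∫ dx / a` for
`a(t) = min (α (1 + C₁ exp (γ t))) 2`.
-/

open Filter Topology MeasureTheory InnerProductSpace
open scoped Laplacian

section Subharmonic

/-- `V` is twice continuously differentiable near `p` and its Laplacian at `p` is nonnegative:
subharmonicity in the classical sense, which is all that regularised boundary data require. -/
def SubharmonicAt (V : ℂ → ℝ) (p : ℂ) : Prop :=
  ContDiffAt ℝ 2 V p ∧ 0 ≤ Δ V p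

theorem laplacian_eq_fderiv_fderiv (V : ℂ → ℝ) (p : ℂ) :
    Δ V p = fderiv ℝ (fderiv ℝ V) p 1 1 + fderiv ℝ (fderiv ℝ V) p Complex.I Complex.I := by
  simp only [laplacian_eq_iteratedFDeriv_complexPlane, iteratedFDeriv_two_apply,
    Matrix.cons_val_zero, Matrix.cons_val_one]

theorem contDiffAt_fderiv_apply {n : ℕ} {f : ℂ → ℝ} {p : ℂ}
    (hf : ContDiffAt ℝ (n + 1) f p) (v : ℂ) : ContDiffAt ℝ n (fun z => fderiv ℝ f z v) p :=
  (hf.fderiv_right le_rfl).clm_apply contDiffAt_const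

theorem fderiv_fderiv_apply {f : ℂ → ℝ} {p : ℂ} (hf : ContDiffAt ℝ 2 f p) (v : ℂ) :
    fderiv ℝ (fun z => fderiv ℝ f z v) p v = fderiv ℝ (fderiv ℝ f) p v v := by
  rw [fderiv_clm_apply ((hf.fderiv_right (m := 1) (by norm_num)).differentiableAt (by norm_num))
    (differentiableAt_const v)]
  simp

theorem continuousAt_fderiv_fderiv_apply {f : ℂ → ℝ} {p : ℂ} (hf : ContDiffAt ℝ 2 f p) (v : ℂ) :
    ContinuousAt (fun z => fderiv ℝ (fderiv ℝ f) z v v) p :=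
  (((hf.fderiv_right (m := 1) (by norm_num)).fderiv_right (m := 0) (by norm_num)).clm_apply
    contDiffAt_const |>.clm_apply contDiffAt_const).continuousAt

theorem continuousAt_laplacian {f : ℂ → ℝ} {p : ℂ} (hf : ContDiffAt ℝ 2 f p) :
    ContinuousAt (Δ f) p := by
  rw [funext (laplacian_eq_fderiv_fderiv f)]
  exact (continuousAt_fderiv_fderiv_apply hf 1).add (continuousAt_fderiv_fderiv_apply hf Complex.I)

theorem SubharmonicAt.congr {V W : ℂ → ℝ} {p : ℂ} (hV : SubharmonicAt V p) (h : W =ᶠ[𝓝 p] V) :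
    SubharmonicAt W p :=
  ⟨hV.1.congr_of_eventuallyEq h, by rw [(laplacian_congr_nhds h).eq_of_nhds]; exact hV.2⟩

theorem subharmonicAt_const (k : ℝ) (p : ℂ) : SubharmonicAt (fun _ => k) p :=
  ⟨contDiffAt_const, by simp [laplacian_eq_fderiv_fderiv]⟩

theorem subharmonicAt_indicator {v : ℂ → ℝ} {D : Set ℂ} {p : ℂ} (hD : IsOpen D)
    (hinside : p ∈ D → SubharmonicAt v p)
    (hfrontier : p ∈ frontier D → ∀ᶠ q in 𝓝[D] p, v q = 0) :
    SubharmonicAt (D.indicator v) p := by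
  by_cases hpD : p ∈ D
  · refine (hinside hpD).congr ?_
    filter_upwards [hD.mem_nhds hpD] with q hq using indicator_of_mem hq v
  refine (subharmonicAt_const 0 p).congr ?_
  by_cases hcl : p ∈ closure D
  · have hzero := hfrontier (hD.frontier_eq ▸ ⟨hcl, hpD⟩)
    filter_upwards [eventually_nhdsWithin_iff.1 hzero] with q hq
    exact indicator_apply_eq_zero.2 hq
  · filter_upwards [isClosed_closure.isOpen_compl.mem_nhds hcl] with q hq
    exact indicator_of_notMem (fun h => hq (subset_closure h)) v

theorem fderiv_fderiv_comp_analyticAt {V : ℂ → ℝ} {Ψ : ℂ → ℂ} {q : ℂ}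
    (hV : ContDiffAt ℝ 2 V (Ψ q)) (hΨ : AnalyticAt ℂ Ψ q) (v : ℂ) :
    fderiv ℝ (fderiv ℝ (V ∘ Ψ)) q v v =
      fderiv ℝ (fderiv ℝ V) (Ψ q) (v * deriv Ψ q) (v * deriv Ψ q) +
        fderiv ℝ V (Ψ q) (v * (v * deriv (deriv Ψ) q)) := by
  have hDΨ : ∀ {G : ℂ → ℂ} {z}, AnalyticAt ℂ G z → HasFDerivAt G
      ((ContinuousLinearMap.toSpanSingleton ℂ (deriv G z)).restrictScalars ℝ) z := fun h =>
    h.differentiableAt.hasDerivAt.hasFDerivAt.restrictScalars ℝ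
  have hfirst : (fun z => fderiv ℝ (V ∘ Ψ) z v) =ᶠ[𝓝 q]
      fun z => fderiv ℝ V (Ψ z) (v * deriv Ψ z) := by
    have hVnear := hΨ.continuousAt.eventually (hV.eventually (by simp))
    filter_upwards [hVnear, hΨ.eventually_analyticAt] with z hVz hΨz
    rw [((hVz.differentiableAt (by norm_num)).hasFDerivAt.comp z (hDΨ hΨz)).fderiv]
    simp
  have hDV : DifferentiableAt ℝ (fderiv ℝ V) (Ψ q) :=
    (hV.fderiv_right (m := 1) (by norm_num)).differentiableAt (by norm_num)
  have hsecond := ((hDV.hasFDerivAt.comp q (hDΨ hΨ)).clm_apply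
    ((hDΨ hΨ.deriv).const_mul v)).fderiv
  calc fderiv ℝ (fderiv ℝ (V ∘ Ψ)) q v v = fderiv ℝ (fun z => fderiv ℝ (V ∘ Ψ) z v) q v :=
        (fderiv_fderiv_apply (hV.comp q (hΨ.contDiffAt.restrict_scalars ℝ)) v).symm
    _ = _ := by
        rw [hfirst.fderiv_eq]
        refine (DFunLike.congr_fun hsecond v).trans ?_
        simp [add_comm]

theorem laplacian_comp_analyticAt {V : ℂ → ℝ} {Ψ : ℂ → ℂ} {q : ℂ}
    (hV : ContDiffAt ℝ 2 V (Ψ q)) (hΨ : AnalyticAt ℂ Ψ q) :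
    Δ (V ∘ Ψ) q = ‖deriv Ψ q‖ ^ 2 * Δ V (Ψ q) := by
  have hbilin : ∀ (B : ℂ →L[ℝ] ℂ →L[ℝ] ℝ) (a : ℂ),
      B a a + B (Complex.I * a) (Complex.I * a) = ‖a‖ ^ 2 * (B 1 1 + B Complex.I Complex.I) := by
    intro B a
    have ha : a = a.re • (1 : ℂ) + a.im • Complex.I := by simp [Complex.re_add_im]
    have hIa : Complex.I * a = (-a.im) • (1 : ℂ) + a.re • Complex.I := by
      apply Complex.ext <;> simp
    rw [hIa, Complex.sq_norm, Complex.normSq_apply]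
    nth_rewrite 1 2 [ha]
    simp only [map_add, map_smul, add_apply, smul_apply, smul_eq_mul]
    ring
  have hcancel : fderiv ℝ V (Ψ q) (Complex.I * (Complex.I * deriv (deriv Ψ) q)) =
      -fderiv ℝ V (Ψ q) (deriv (deriv Ψ) q) := by
    rw [← mul_assoc, Complex.I_mul_I, neg_one_mul, map_neg]
  rw [laplacian_eq_fderiv_fderiv, laplacian_eq_fderiv_fderiv, ← hbilin,
    fderiv_fderiv_comp_analyticAt hV hΨ, fderiv_fderiv_comp_analyticAt hV hΨ, hcancel]
  simp only [one_mul]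
  ring

theorem SubharmonicAt.comp_analyticAt {V : ℂ → ℝ} {Ψ : ℂ → ℂ} {q : ℂ}
    (hV : SubharmonicAt V (Ψ q)) (hΨ : AnalyticAt ℂ Ψ q) : SubharmonicAt (V ∘ Ψ) q :=
  ⟨hV.1.comp q (hΨ.contDiffAt.restrict_scalars ℝ), by
    rw [laplacian_comp_analyticAt hV.1 hΨ]
    exact mul_nonneg (sq_nonneg _) hV.2⟩

theorem subharmonicAt_comp_re {f : ℝ → ℝ} (hf : ContDiff ℝ 2 f)
    (hf2 : ∀ x, 0 ≤ deriv (deriv f) x) (p : ℂ) : SubharmonicAt (fun z => f z.re) p := by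
  have hfd : Differentiable ℝ f := hf.differentiable (by norm_num)
  have hfd' : Differentiable ℝ (deriv f) :=
    ((contDiff_succ_iff_deriv (n := 1)).1 hf).2.2.differentiable (by norm_num)
  have hfirst : fderiv ℝ (fun z : ℂ => f z.re) = fun z => deriv f z.re • Complex.reCLM :=
    funext fun z =>
      ((hfd z.re).hasDerivAt.comp_hasFDerivAt z Complex.reCLM.hasFDerivAt).fderiv
  have hsecond : fderiv ℝ (fderiv ℝ fun z : ℂ => f z.re) p =
      (deriv (deriv f) p.re • Complex.reCLM).smulRight Complex.reCLM := by
    rw [hfirst]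
    exact (((hfd' p.re).hasDerivAt.comp_hasFDerivAt p Complex.reCLM.hasFDerivAt).smul_const
      Complex.reCLM).fderiv
  refine ⟨(hf.comp Complex.reCLM.contDiff).contDiffAt, ?_⟩
  rw [laplacian_eq_fderiv_fderiv, hsecond]
  simpa using hf2 p.re

theorem SubharmonicAt.convex_comp_harmonicAt {f : ℝ → ℝ} {u : ℂ → ℝ} {p : ℂ}
    (hf : ContDiff ℝ 2 f) (hf2 : ∀ x, 0 ≤ deriv (deriv f) x) (hu : HarmonicAt u p) :
    SubharmonicAt (f ∘ u) p := by
  obtain ⟨R, hR, hball⟩ := Metric.eventually_nhds_iff_ball.1 hu.eventually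
  obtain ⟨F, hF, hre⟩ := InnerProductSpace.HarmonicOnNhd.exists_analyticOnNhd_ball_re_eq
    (z := p) (R := R) (f := u) fun z hz => hball z hz
  have hp : p ∈ Metric.ball p R := Metric.mem_ball_self hR
  refine ((subharmonicAt_comp_re hf hf2 (F p)).comp_analyticAt (hF p hp)).congr ?_
  filter_upwards [Metric.isOpen_ball.mem_nhds hp] with z hz
  simp [← hre hz]

end Subharmonic

section VerticalIntegral

variable {S : Set ℝ} {f : ℂ → ℝ} {c d t : ℝ}

theorem hasDerivAt_horizontal {f : ℂ → ℝ} {t y : ℝ}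
    (hf : DifferentiableAt ℝ f (t + y * Complex.I)) :
    HasDerivAt (fun s : ℝ => f (s + y * Complex.I)) (fderiv ℝ f (t + y * Complex.I) 1) t :=
  hf.hasFDerivAt.comp_hasDerivAt t ((Complex.ofRealCLM.hasDerivAt (x := t)).add_const _)

theorem hasDerivAt_vertical {f : ℂ → ℝ} {t y : ℝ}
    (hf : DifferentiableAt ℝ f (t + y * Complex.I)) :
    HasDerivAt (fun s : ℝ => f (t + s * Complex.I))
      (fderiv ℝ f (t + y * Complex.I) Complex.I) y := by
  have hline : HasDerivAt (fun s : ℝ => (t : ℂ) + s * Complex.I) Complex.I y := by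
    simpa using ((Complex.ofRealCLM.hasDerivAt (x := y)).mul_const Complex.I).const_add (t : ℂ)
  exact hf.hasFDerivAt.comp_hasDerivAt y hline

theorem continuous_vertical (hf : ∀ p : ℂ, p.re ∈ S → ContinuousAt f p) (ht : t ∈ S) :
    Continuous fun y : ℝ => f (t + y * Complex.I) :=
  continuous_iff_continuousAt.2 fun y =>
    ContinuousAt.comp (g := f) (f := fun y : ℝ => (t : ℂ) + y * Complex.I)
      (hf _ (by simpa using ht)) (by fun_prop)

theorem hasDerivAt_integral_vertical (hS : IsOpen S)
    (hf : ∀ p : ℂ, p.re ∈ S → ContDiffAt ℝ 1 f p) (ht : t ∈ S) :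
    HasDerivAt (fun t : ℝ => ∫ y in c..d, f (t + y * Complex.I))
      (∫ y in c..d, fderiv ℝ f (t + y * Complex.I) 1) t := by
  have hdiff : ∀ s ∈ S, ∀ y : ℝ, DifferentiableAt ℝ f (s + y * Complex.I) := fun s hs y =>
    (hf _ (by simpa using hs)).differentiableAt (by norm_num)
  have hf' : ∀ p : ℂ, p.re ∈ S → ContinuousAt (fun z => fderiv ℝ f z 1) p := fun p hp =>
    (contDiffAt_fderiv_apply (n := 0) (hf p hp) 1).continuousAt
  obtain ⟨r, hr, hrS⟩ := Metric.nhds_basis_closedBall.mem_iff.1 (hS.mem_nhds ht)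
  have hslab : ContinuousOn (fun q : ℝ × ℝ => fderiv ℝ f (q.1 + q.2 * Complex.I) 1)
      (Metric.closedBall t r ×ˢ uIcc c d) := fun q hq =>
    (ContinuousAt.comp (g := fun z => fderiv ℝ f z 1)
      (f := fun q : ℝ × ℝ => (q.1 : ℂ) + q.2 * Complex.I)
      (hf' _ (by simpa using hrS hq.1)) (by fun_prop)).continuousWithinAt
  obtain ⟨C, hC⟩ := ((isCompact_closedBall t r).prod
    isCompact_uIcc).exists_bound_of_continuousOn hslab
  refine (intervalIntegral.hasDerivAt_integral_of_dominated_loc_of_deriv_le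
    (bound := fun _ => C) (Metric.closedBall_mem_nhds t hr) ?_ ?_ ?_
    (.of_forall fun y hy s hs => hC (s, y) ⟨hs, uIoc_subset_uIcc hy⟩) intervalIntegrable_const
    (.of_forall fun y _ s hs => hasDerivAt_horizontal (hdiff s (hrS hs) y))).2
  · filter_upwards [hS.mem_nhds ht] with s hs
    exact (continuous_vertical (fun p hp => (hf p hp).continuousAt) hs).aestronglyMeasurable
  · exact (continuous_vertical (fun p hp => (hf p hp).continuousAt) ht).intervalIntegrable _ _
  · exact (continuous_vertical hf' ht).aestronglyMeasurable

/- The vertical second derivative integrates to the difference of `∂f/∂y` at the two ends. -/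
theorem hasDerivAt_integral_vertical_fderiv (hS : IsOpen S)
    (hf : ∀ p : ℂ, p.re ∈ S → ContDiffAt ℝ 2 f p) (ht : t ∈ S)
    (hends : fderiv ℝ f (t + d * Complex.I) Complex.I = fderiv ℝ f (t + c * Complex.I) Complex.I) :
    HasDerivAt (fun t : ℝ => ∫ y in c..d, fderiv ℝ f (t + y * Complex.I) 1)
      (∫ y in c..d, Δ f (t + y * Complex.I)) t := by
  have hfv : ∀ v p : ℂ, p.re ∈ S → ContDiffAt ℝ 1 (fun z => fderiv ℝ f z v) p :=
    fun v p hp => contDiffAt_fderiv_apply (n := 1) (hf p hp) v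
  have hline : ∀ y : ℝ, ((t : ℂ) + y * Complex.I).re ∈ S := fun y => by simpa using ht
  have hcont : ∀ v : ℂ, Continuous fun y : ℝ => fderiv ℝ (fderiv ℝ f) (t + y * Complex.I) v v :=
    fun v => continuous_vertical (fun p hp => continuousAt_fderiv_fderiv_apply (hf p hp) v) ht
  have hvertical : ∫ y in c..d,
      fderiv ℝ (fderiv ℝ f) (t + y * Complex.I) Complex.I Complex.I = 0 := by
    rw [intervalIntegral.integral_eq_sub_of_hasDerivAt (fun y _ =>
      (fderiv_fderiv_apply (hf _ (hline y)) Complex.I ▸ hasDerivAt_vertical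
        ((hfv Complex.I _ (hline y)).differentiableAt (by norm_num))))
      ((hcont Complex.I).intervalIntegrable _ _), hends, sub_self]
  refine (hasDerivAt_integral_vertical hS (hfv 1) ht).congr_deriv ?_
  simp only [laplacian_eq_fderiv_fderiv, fderiv_fderiv_apply (hf _ (hline _))]
  rw [intervalIntegral.integral_add ((hcont 1).intervalIntegrable _ _)
    ((hcont Complex.I).intervalIntegrable _ _), hvertical, add_zero]

end VerticalIntegral

section MeanValue

variable {V : ℂ → ℝ} {c : ℂ} {R M : ℝ}

theorem monotoneOn_Iio_of_convexOn_of_le {φ : ℝ → ℝ} {b : ℝ} (hφ : ConvexOn ℝ (Iio b) φ)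
    (hM : ∀ x < b, φ x ≤ M) : MonotoneOn φ (Iio b) := by
  intro x hx y hy hxy
  by_contra! hlt
  have hxy' : x < y := hxy.lt_of_ne (by rintro rfl; exact lt_irrefl _ hlt)
  set k := (φ x - φ y) / (y - x) with hk
  have hk0 : 0 < k := div_pos (by linarith) (by linarith)
  set s := |M - φ x| / k + 1 with hs
  have hs0 : 0 < s := by positivity
  have hslope := hφ.slope_mono_adjacent (x := x - s) (y := x) (z := y)
    (mem_Iio.2 (by linarith [mem_Iio.1 hx])) hy (by linarith) hxy'
  rw [sub_sub_cancel, ← neg_sub (φ x) (φ y), neg_div, ← hk, div_le_iff₀ hs0] at hslope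
  have hks : k * s = |M - φ x| + k := by rw [hs]; field_simp
  linarith [le_abs_self (M - φ x), hM (x - s) (by linarith [mem_Iio.1 hx])]

theorem circleAverage_exp (V : ℂ → ℝ) (c : ℂ) (l : ℝ) :
    Real.circleAverage V c (Real.exp l) = (2 * Real.pi)⁻¹ *
      ∫ θ in (0 : ℝ)..2 * Real.pi, V (c + Complex.exp (l + θ * Complex.I)) := by
  simp only [Real.circleAverage_def, circleMap, Complex.ofReal_exp, Complex.exp_add, smul_eq_mul]

theorem convexOn_integral_vertical_of_periodic {W : ℂ → ℝ} {b T : ℝ} (hT : 0 ≤ T)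
    (hW : ∀ p : ℂ, p.re < b → SubharmonicAt W p) (hper : ∀ p, W (p + T * Complex.I) = W p) :
    ConvexOn ℝ (Iio b) fun l : ℝ => ∫ y in (0 : ℝ)..T, W (l + y * Complex.I) := by
  have hper' : ∀ p : ℂ, fderiv ℝ W (p + T * Complex.I) = fderiv ℝ W p := fun p => by
    rw [← fderiv_comp_add_right]
    simp only [hper]
  have hderiv : ∀ l ∈ Iio b, HasDerivAt
      (fun l : ℝ => ∫ y in (0 : ℝ)..T, W (l + y * Complex.I)) _ l := fun l hl =>
    hasDerivAt_integral_vertical isOpen_Iio (fun p hp => (hW p hp).1.of_le (by norm_num)) hl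
  refine convexOn_of_hasDerivWithinAt2_nonneg (convex_Iio b)
    (fun l hl => (hderiv l hl).continuousAt.continuousWithinAt)
    (f'' := fun l => ∫ y in (0 : ℝ)..T, Δ W (l + y * Complex.I))
    (fun l hl => (hderiv l (by simpa using hl)).hasDerivWithinAt) (fun l hl => ?_) fun l hl => ?_
  · exact (hasDerivAt_integral_vertical_fderiv isOpen_Iio (fun p hp => (hW p hp).1)
      (by simpa using hl) (by simpa using DFunLike.congr_fun (hper' l) Complex.I)).hasDerivWithinAt
  · exact intervalIntegral.integral_nonneg hT fun y _ => (hW _ (by simpa using hl)).2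

/- In the coordinate `l = log r` the circle means are vertical integrals of a function of period
`2πi`, hence convex in `l`; being bounded above as `l → -∞`, they increase. -/
theorem monotoneOn_circleAverage_of_subharmonicAt
    (hV : ∀ z ∈ Metric.ball c R, SubharmonicAt V z) (hM : ∀ z ∈ Metric.ball c R, V z ≤ M) :
    MonotoneOn (Real.circleAverage V c) (Ioo 0 R) := by
  intro r hr s hs hrs
  have hR : 0 < R := hr.1.trans hr.2
  set W : ℂ → ℝ := V ∘ fun p => c + Complex.exp p with hW
  have hball : ∀ p : ℂ, p.re < Real.log R → c + Complex.exp p ∈ Metric.ball c R := by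
    intro p hp
    rw [mem_ball_iff_norm, add_sub_cancel_left, Complex.norm_exp]
    exact (Real.lt_log_iff_exp_lt hR).1 hp
  have hWsub : ∀ p : ℂ, p.re < Real.log R → SubharmonicAt W p := fun p hp =>
    SubharmonicAt.comp_analyticAt (Ψ := fun p => c + Complex.exp p) (hV _ (hball p hp))
      (by fun_prop)
  have hconvex := convexOn_integral_vertical_of_periodic Real.two_pi_pos.le hWsub fun p => by
    simp [hW, Complex.exp_periodic _]
  have hmono := monotoneOn_Iio_of_convexOn_of_le (M := ∫ _ in (0 : ℝ)..2 * Real.pi, M) hconvex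
    fun l hl => intervalIntegral.integral_mono_on (by positivity)
      ((continuous_vertical (S := Iio _) (fun p hp => (hWsub p hp).1.continuousAt)
        hl).intervalIntegrable _ _)
      (by simp) fun θ _ => hM _ (hball _ (by simpa using hl))
  rw [← Real.exp_log hr.1, ← Real.exp_log hs.1, circleAverage_exp, circleAverage_exp]
  exact mul_le_mul_of_nonneg_left (hmono (Real.log_lt_log hr.1 hr.2)
    (Real.log_lt_log hs.1 hs.2) (Real.log_le_log hr.1 hrs)) (by positivity)

theorem le_circleAverage_of_mem_Ioo {r : ℝ} (hr : r ∈ Ioo 0 R)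
    (hV : ∀ z ∈ Metric.ball c R, SubharmonicAt V z) (hM : ∀ z ∈ Metric.ball c R, V z ≤ M) :
    V c ≤ Real.circleAverage V c r := by
  have hcont : ContinuousOn (Real.circleAverage V c) (Ico 0 R) :=
    Real.ContinuousOn.circleAverage (fun z hz => (hV z
      (mem_ball_iff_norm.2 hz.2)).1.continuousAt.continuousWithinAt) fun s hs => hs.1
  have hlim : Tendsto (Real.circleAverage V c) (𝓝[Ioo 0 R] 0) (𝓝 (V c)) := by
    simpa using (hcont 0 ⟨le_rfl, hr.1.trans hr.2⟩).tendsto.mono_left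
      (nhdsWithin_mono _ Ioo_subset_Ico_self)
  have : (𝓝[Ioo 0 R] (0 : ℝ)).NeBot := left_nhdsWithin_Ioo_neBot (hr.1.trans hr.2)
  refine le_of_tendsto hlim ?_
  filter_upwards [self_mem_nhdsWithin, nhdsWithin_le_nhds (Iio_mem_nhds hr.1)] with s hs hsr
  exact monotoneOn_circleAverage_of_subharmonicAt hV hM hs hr (le_of_lt hsr)

theorem le_circleAverage_of_ae_continuousAt (hR : 0 < R)
    (hV : ∀ z ∈ Metric.ball c R, SubharmonicAt V z) (hM : ∀ z ∈ Metric.ball c R, |V z| ≤ M)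
    (hbd : ∀ᵐ θ : ℝ, ContinuousAt V (circleMap c R θ)) : V c ≤ Real.circleAverage V c R := by
  have hball : ∀ {r : ℝ}, r ∈ Ioo 0 R → ∀ θ, circleMap c r θ ∈ Metric.ball c R := fun hr θ =>
    Metric.closedBall_subset_ball hr.2 (circleMap_mem_closedBall c hr.1.le θ)
  have hIoo : ∀ᶠ r in 𝓝[<] R, r ∈ Ioo 0 R := Ioo_mem_nhdsLT hR
  have hlim : Tendsto (Real.circleAverage V c) (𝓝[<] R) (𝓝 (Real.circleAverage V c R)) := by
    refine Tendsto.const_smul (intervalIntegral.tendsto_integral_filter_of_dominated_convergence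
      (fun _ => M) ?_ ?_ intervalIntegrable_const ?_) _
    · filter_upwards [hIoo] with r hr
      refine (continuous_iff_continuousAt.2 fun θ => ?_).aestronglyMeasurable
      exact (hV _ (hball hr θ)).1.continuousAt.comp (continuous_circleMap c r).continuousAt
    · filter_upwards [hIoo] with r hr
      exact .of_forall fun θ _ => hM _ (hball hr θ)
    · filter_upwards [hbd] with θ hθ _
      exact hθ.tendsto.comp (Continuous.tendsto' (by fun_prop) _ _ rfl |>.mono_left
        nhdsWithin_le_nhds)
  refine ge_of_tendsto hlim ?_
  filter_upwards [hIoo] with r hr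
  exact le_circleAverage_of_mem_Ioo hr hV fun z hz => (le_abs_self _).trans (hM z hz)

end MeanValue

section Wirtinger

variable {g g' : ℝ → ℝ} {P Q μ : ℝ}

/- With `T = μ tan (μ (y - (P + Q) / 2))`, which solves `T' = μ ^ 2 + T ^ 2`, the difference of the
two integrands is `(g' + T g) ^ 2` minus the derivative of `T g ^ 2`. -/
theorem wirtinger_inequality_of_lt (hPQ : P ≤ Q) (hg : ∀ y ∈ Icc P Q, HasDerivAt g (g' y) y)
    (hg' : ContinuousOn g' (Icc P Q)) (hgP : g P = 0) (hgQ : g Q = 0) (hμ : 0 ≤ μ)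
    (hμPQ : μ * (Q - P) < Real.pi) :
    μ ^ 2 * ∫ y in P..Q, g y ^ 2 ≤ ∫ y in P..Q, g' y ^ 2 := by
  have hgc : ContinuousOn g (Icc P Q) := fun y hy => (hg y hy).continuousAt.continuousWithinAt
  set T : ℝ → ℝ := fun y => μ * Real.tan (μ * (y - (P + Q) / 2)) with hT
  have hTderiv : ∀ y ∈ Icc P Q, HasDerivAt T (μ ^ 2 + T y ^ 2) y := by
    intro y hy
    have hcos : Real.cos (μ * (y - (P + Q) / 2)) ≠ 0 := (Real.cos_pos_of_mem_Ioo
      ⟨by nlinarith [hy.1], by nlinarith [hy.2]⟩).ne'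
    refine (((Real.hasDerivAt_tan hcos).comp y
      (((hasDerivAt_id y).sub_const _).const_mul μ)).const_mul μ).congr_deriv ?_
    simp only [hT, mul_pow, ← Real.inv_one_add_tan_sq hcos]
    field_simp
  have hTc : ContinuousOn T (Icc P Q) := fun y hy =>
    (hTderiv y hy).continuousAt.continuousWithinAt
  set D : ℝ → ℝ := fun y => (μ ^ 2 + T y ^ 2) * g y ^ 2 + T y * (2 * g y * g' y) with hD
  have hDint : IntervalIntegrable D volume P Q :=
    ContinuousOn.intervalIntegrable_of_Icc hPQ (by fun_prop)
  have hDzero : ∫ y in P..Q, D y = 0 := by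
    rw [intervalIntegral.integral_eq_sub_of_hasDerivAt (f := fun y => T y * g y ^ 2)
      (fun y hy => ?_) hDint, hgP, hgQ]
    · simp
    · rw [uIcc_of_le hPQ] at hy
      exact ((hTderiv y hy).mul ((hg y hy).pow 2)).congr_deriv (by simp [hD])
  have hgint : IntervalIntegrable (fun y => μ ^ 2 * g y ^ 2) volume P Q :=
    ContinuousOn.intervalIntegrable_of_Icc hPQ (by fun_prop)
  have hg'int : IntervalIntegrable (fun y => g' y ^ 2) volume P Q :=
    ContinuousOn.intervalIntegrable_of_Icc hPQ (by fun_prop)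
  have hpos : 0 ≤ ∫ y in P..Q, (g' y ^ 2 - μ ^ 2 * g y ^ 2 + D y) :=
    intervalIntegral.integral_nonneg hPQ fun y _ => by
      have : g' y ^ 2 - μ ^ 2 * g y ^ 2 + D y = (g' y + T y * g y) ^ 2 := by simp only [hD]; ring
      rw [this]; positivity
  rw [intervalIntegral.integral_add (hg'int.sub hgint) hDint,
    intervalIntegral.integral_sub hg'int hgint, hDzero, intervalIntegral.integral_const_mul] at hpos
  linarith

theorem wirtinger_inequality (hPQ : P ≤ Q) (hg : ∀ y ∈ Icc P Q, HasDerivAt g (g' y) y)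
    (hg' : ContinuousOn g' (Icc P Q)) (hgP : g P = 0) (hgQ : g Q = 0) (hμ : 0 < μ)
    (hμPQ : μ * (Q - P) ≤ Real.pi) :
    μ ^ 2 * ∫ y in P..Q, g y ^ 2 ≤ ∫ y in P..Q, g' y ^ 2 := by
  rcases hPQ.eq_or_lt with rfl | hlt
  · simp
  have hlim : Tendsto (fun ν : ℝ => ν ^ 2 * ∫ y in P..Q, g y ^ 2) (𝓝[<] μ)
      (𝓝 (μ ^ 2 * ∫ y in P..Q, g y ^ 2)) :=
    (Continuous.tendsto' (by fun_prop) _ _ rfl).mono_left nhdsWithin_le_nhds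
  refine le_of_tendsto hlim ?_
  filter_upwards [Ioo_mem_nhdsLT hμ] with ν hν
  exact wirtinger_inequality_of_lt hPQ hg hg' hgP hgQ hν.1.le
    ((mul_lt_mul_of_pos_right hν.2 (sub_pos.2 hlt)).trans_le hμPQ)

end Wirtinger

section SliceEnergy

variable {w : ℂ → ℝ} {S : Set ℝ} {c d P Q μ t : ℝ}

/-- The energy `∫ w (t + i y) ^ 2 dy` of `w` on the vertical segment `c ≤ y ≤ d` of abscissa `t`,
meant for functions `w` that vanish on the rest of that vertical line. -/
noncomputable def sliceEnergy (w : ℂ → ℝ) (c d t : ℝ) : ℝ :=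
  ∫ y in c..d, w (t + y * Complex.I) ^ 2

theorem sliceEnergy_eq_integral (hcP : c ≤ P) (hQd : Q ≤ d)
    (hzero : ∀ y : ℝ, y ∉ Ioo P Q → w (t + y * Complex.I) = 0) :
    sliceEnergy w c d t = ∫ y : ℝ, w (t + y * Complex.I) ^ 2 :=
  intervalIntegral.integral_eq_integral_of_support_subset fun y hy => by_contra fun h =>
    hy (by simp [hzero y fun hy' => h (Ioo_subset_Ioc_self (Ioo_subset_Ioo hcP hQd hy'))])

theorem sliceEnergy_le (h0 : ∀ p, 0 ≤ w p) (h1 : ∀ p, w p ≤ 1) (hPQ : P ≤ Q) (hcP : c ≤ P)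
    (hQd : Q ≤ d) (hzero : ∀ y : ℝ, y ∉ Ioo P Q → w (t + y * Complex.I) = 0) :
    sliceEnergy w c d t ≤ Q - P := by
  rw [sliceEnergy_eq_integral hcP hQd hzero, ← sliceEnergy_eq_integral le_rfl le_rfl hzero,
    sliceEnergy]
  refine (Real.le_norm_self _).trans ((intervalIntegral.norm_integral_le_of_norm_le_const
    (C := 1) fun y _ => ?_).trans_eq ?_)
  · rw [Real.norm_eq_abs, abs_of_nonneg (sq_nonneg _)]
    exact pow_le_one₀ (h0 _) (h1 _)
  · rw [one_mul, abs_of_nonneg (sub_nonneg.2 hPQ)]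

theorem fderiv_sq_apply {p : ℂ} (hw : DifferentiableAt ℝ w p) (v : ℂ) :
    fderiv ℝ (fun z => w z ^ 2) p v = 2 * w p * fderiv ℝ w p v := by
  simp [(hw.hasFDerivAt.pow 2).fderiv]

theorem fderiv_fderiv_sq_apply {p : ℂ} (hw : ContDiffAt ℝ 2 w p) (v : ℂ) :
    fderiv ℝ (fderiv ℝ fun z => w z ^ 2) p v v =
      2 * (fderiv ℝ w p v ^ 2 + w p * fderiv ℝ (fderiv ℝ w) p v v) := by
  have hDw : DifferentiableAt ℝ (fderiv ℝ w) p :=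
    (hw.fderiv_right (m := 1) (by norm_num)).differentiableAt (by norm_num)
  have hfirst : fderiv ℝ (fun z => w z ^ 2) =ᶠ[𝓝 p] fun z => (2 * w z) • fderiv ℝ w z := by
    filter_upwards [hw.eventually (by simp)] with z hz
    exact ContinuousLinearMap.ext fun v => fderiv_sq_apply (hz.differentiableAt (by norm_num)) v
  have hsecond := ((hw.differentiableAt (by norm_num)).hasFDerivAt.const_mul 2).smul
    hDw.hasFDerivAt
  rw [hfirst.fderiv_eq]
  refine (DFunLike.congr_fun (DFunLike.congr_fun hsecond.fderiv v) v).trans ?_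
  simp only [add_apply, smul_apply, ContinuousLinearMap.smulRight_apply, smul_eq_mul]
  ring

theorem laplacian_sq {p : ℂ} (hw : ContDiffAt ℝ 2 w p) :
    Δ (fun z => w z ^ 2) p =
      2 * (fderiv ℝ w p 1 ^ 2 + fderiv ℝ w p Complex.I ^ 2) + 2 * w p * Δ w p := by
  rw [laplacian_eq_fderiv_fderiv, laplacian_eq_fderiv_fderiv, fderiv_fderiv_sq_apply hw,
    fderiv_fderiv_sq_apply hw]
  ring

theorem sq_add_mul_le_laplacian_sq_add {p : ℂ} (hw : SubharmonicAt w p) (h0 : 0 ≤ w p) (μ : ℝ) :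
    2 * (fderiv ℝ w p Complex.I ^ 2 - μ ^ 2 * w p ^ 2) ≤
      Δ (fun z => w z ^ 2) p + 2 * μ * fderiv ℝ (fun z => w z ^ 2) p 1 := by
  rw [laplacian_sq hw.1, fderiv_sq_apply (hw.1.differentiableAt (by norm_num))]
  nlinarith [mul_nonneg h0 hw.2, sq_nonneg (fderiv ℝ w p 1 + μ * w p)]

theorem hasDerivAt_sliceEnergy (hS : IsOpen S) (hw : ∀ p : ℂ, p.re ∈ S → ContDiffAt ℝ 1 w p)
    (ht : t ∈ S) :
    HasDerivAt (sliceEnergy w c d)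
      (∫ y in c..d, fderiv ℝ (fun z => w z ^ 2) (t + y * Complex.I) 1) t :=
  hasDerivAt_integral_vertical hS (fun p hp => (hw p hp).pow 2) ht

theorem hasDerivAt_deriv_sliceEnergy (hS : IsOpen S)
    (hw : ∀ p : ℂ, p.re ∈ S → ContDiffAt ℝ 2 w p) (ht : t ∈ S)
    (hc : w (t + c * Complex.I) = 0) (hd : w (t + d * Complex.I) = 0) :
    HasDerivAt (fun t : ℝ => ∫ y in c..d, fderiv ℝ (fun z => w z ^ 2) (t + y * Complex.I) 1)
      (∫ y in c..d, Δ (fun z => w z ^ 2) (t + y * Complex.I)) t := by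
  have hdiff : ∀ y : ℝ, DifferentiableAt ℝ w (t + y * Complex.I) := fun y =>
    (hw _ (by simpa using ht)).differentiableAt (by norm_num)
  refine hasDerivAt_integral_vertical_fderiv hS (fun p hp => (hw p hp).pow 2) ht ?_
  rw [fderiv_sq_apply (hdiff d), fderiv_sq_apply (hdiff c), hc, hd]
  simp

theorem wirtinger_inequality_vertical (ht : t ∈ S) (hw : ∀ p : ℂ, p.re ∈ S → ContDiffAt ℝ 1 w p)
    (hPQ : P ≤ Q) (hcP : c ≤ P) (hQd : Q ≤ d) (hμ : 0 < μ) (hμPQ : μ * (Q - P) ≤ Real.pi)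
    (hzero : ∀ y : ℝ, y ∉ Ioo P Q → w (t + y * Complex.I) = 0) :
    μ ^ 2 * sliceEnergy w c d t ≤
      ∫ y in c..d, fderiv ℝ w (t + y * Complex.I) Complex.I ^ 2 := by
  have hcont : Continuous fun y : ℝ => fderiv ℝ w (t + y * Complex.I) Complex.I :=
    continuous_vertical (S := S)
      (fun p hp => (contDiffAt_fderiv_apply (n := 0) (hw p hp) Complex.I).continuousAt) ht
  calc μ ^ 2 * sliceEnergy w c d t = μ ^ 2 * ∫ y in P..Q, w (t + y * Complex.I) ^ 2 := by
        rw [sliceEnergy_eq_integral hcP hQd hzero,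
          ← sliceEnergy_eq_integral le_rfl le_rfl hzero, sliceEnergy]
    _ ≤ ∫ y in P..Q, fderiv ℝ w (t + y * Complex.I) Complex.I ^ 2 :=
        wirtinger_inequality hPQ (fun y _ => hasDerivAt_vertical
          ((hw _ (by simpa using ht)).differentiableAt (by norm_num))) hcont.continuousOn
          (hzero P (by simp)) (hzero Q (by simp)) hμ hμPQ
    _ ≤ _ := intervalIntegral.integral_mono_interval hcP hPQ hQd
        (.of_forall fun y => sq_nonneg _) ((hcont.pow 2).intervalIntegrable _ _)

/- In terms of `A = sliceEnergy w c d` this reads `0 ≤ A'' + 2 μ A'`. -/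
theorem sliceEnergy_differential_inequality (ht : t ∈ S)
    (hw : ∀ p : ℂ, p.re ∈ S → SubharmonicAt w p) (h0 : ∀ p, 0 ≤ w p)
    (hPQ : P ≤ Q) (hcP : c ≤ P) (hQd : Q ≤ d) (hμ : 0 < μ) (hμPQ : μ * (Q - P) ≤ Real.pi)
    (hzero : ∀ y : ℝ, y ∉ Ioo P Q → w (t + y * Complex.I) = 0) :
    0 ≤ (∫ y in c..d, Δ (fun z => w z ^ 2) (t + y * Complex.I)) +
      2 * μ * ∫ y in c..d, fderiv ℝ (fun z => w z ^ 2) (t + y * Complex.I) 1 := by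
  have hsq : ∀ p : ℂ, p.re ∈ S → ContDiffAt ℝ 2 (fun z => w z ^ 2) p := fun p hp =>
    (hw p hp).1.pow 2
  have hw1 : ∀ p : ℂ, p.re ∈ S → ContDiffAt ℝ 1 w p := fun p hp =>
    (hw p hp).1.of_le (by norm_num)
  have hwsq : IntervalIntegrable (fun y : ℝ => μ ^ 2 * w (t + y * Complex.I) ^ 2) volume c d :=
    (((continuous_vertical (fun p hp => (hw p hp).1.continuousAt) ht).pow 2).const_mul
      _).intervalIntegrable _ _
  have hdy : IntervalIntegrable
      (fun y : ℝ => fderiv ℝ w (t + y * Complex.I) Complex.I ^ 2) volume c d :=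
    ((continuous_vertical (S := S) (fun p hp => (contDiffAt_fderiv_apply (n := 0)
      (hw1 p hp) Complex.I).continuousAt) ht).pow 2).intervalIntegrable _ _
  have hlap : IntervalIntegrable (fun y : ℝ => Δ (fun z => w z ^ 2) (t + y * Complex.I))
      volume c d :=
    (continuous_vertical (fun p hp => continuousAt_laplacian (hsq p hp)) ht).intervalIntegrable _ _
  have hdx : IntervalIntegrable
      (fun y : ℝ => 2 * μ * fderiv ℝ (fun z => w z ^ 2) (t + y * Complex.I) 1) volume c d :=
    ((continuous_vertical (S := S) (fun p hp => (contDiffAt_fderiv_apply (n := 1)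
      (hsq p hp) 1).continuousAt) ht).const_mul _).intervalIntegrable _ _
  have hwirt := wirtinger_inequality_vertical ht hw1 hPQ hcP hQd hμ hμPQ hzero
  calc (0 : ℝ) ≤ 2 * ((∫ y in c..d, fderiv ℝ w (t + y * Complex.I) Complex.I ^ 2) -
        μ ^ 2 * sliceEnergy w c d t) := by linarith
    _ = ∫ y in c..d, 2 * (fderiv ℝ w (t + y * Complex.I) Complex.I ^ 2 -
        μ ^ 2 * w (t + y * Complex.I) ^ 2) := by
      rw [intervalIntegral.integral_const_mul, intervalIntegral.integral_sub hdy hwsq,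
        intervalIntegral.integral_const_mul, sliceEnergy]
    _ ≤ ∫ y in c..d, (Δ (fun z => w z ^ 2) (t + y * Complex.I) +
        2 * μ * fderiv ℝ (fun z => w z ^ 2) (t + y * Complex.I) 1) :=
      intervalIntegral.integral_mono_on (by linarith)
        ((hdy.sub hwsq).const_mul 2) (hlap.add hdx) fun y _ =>
          sq_add_mul_le_laplacian_sq_add (hw _ (by simpa using ht)) (h0 _) μ
    _ = _ := by
      rw [intervalIntegral.integral_add hlap hdx, intervalIntegral.integral_const_mul]

end SliceEnergy

section DiscToStrip

/-- The conformal map `ζ ↦ -i log ((1 + ζ) / (1 - ζ))` of the unit disc onto the vertical strip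
`|re z| < π / 2`, fixing the origin. -/
noncomputable def discToStrip (ζ : ℂ) : ℂ :=
  -Complex.I * Complex.log ((1 + ζ) / (1 - ζ))

theorem discToStrip_zero : discToStrip 0 = 0 := by
  simp [discToStrip]

theorem discToStrip_re (ζ : ℂ) : (discToStrip ζ).re = ((1 + ζ) / (1 - ζ)).arg := by
  simp [discToStrip, Complex.log_im]

theorem cayley_re (ζ : ℂ) :
    ((1 + ζ) / (1 - ζ)).re = (1 - ‖ζ‖ ^ 2) / Complex.normSq (1 - ζ) := by
  rw [Complex.div_re, ← add_div, ← Complex.normSq_eq_norm_sq, Complex.normSq_apply ζ]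
  simp only [Complex.add_re, Complex.one_re, Complex.sub_re, Complex.add_im, Complex.one_im,
    Complex.sub_im]
  ring

theorem cayley_im (ζ : ℂ) :
    ((1 + ζ) / (1 - ζ)).im = 2 * ζ.im / Complex.normSq (1 - ζ) := by
  rw [Complex.div_im, ← sub_div]
  simp only [Complex.add_re, Complex.one_re, Complex.sub_re, Complex.add_im, Complex.one_im,
    Complex.sub_im]
  ring

theorem cayley_mem_slitPlane {ζ : ℂ} (hζ : ‖ζ‖ < 1 ∨ ζ.im ≠ 0) :
    ζ ≠ 1 ∧ (1 + ζ) / (1 - ζ) ∈ Complex.slitPlane := by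
  have hne : ζ ≠ 1 := by rintro rfl; simp at hζ
  have hpos : 0 < Complex.normSq (1 - ζ) := Complex.normSq_pos.2 (sub_ne_zero.2 hne.symm)
  refine ⟨hne, Complex.mem_slitPlane_iff.2 (hζ.imp (fun h => ?_) fun h => ?_)⟩
  · rw [cayley_re]
    exact div_pos (sub_pos.2 (pow_lt_one₀ (norm_nonneg ζ) h two_ne_zero)) hpos
  · rw [cayley_im]
    exact div_ne_zero (mul_ne_zero two_ne_zero h) hpos.ne'

theorem abs_discToStrip_re_le {ζ : ℂ} (hζ : ‖ζ‖ ≤ 1) : |(discToStrip ζ).re| ≤ Real.pi / 2 := by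
  rw [discToStrip_re, Complex.abs_arg_le_pi_div_two_iff, cayley_re]
  exact div_nonneg (sub_nonneg.2 (pow_le_one₀ (norm_nonneg ζ) hζ)) (Complex.normSq_nonneg _)

theorem analyticAt_discToStrip {ζ : ℂ} (hζ : ‖ζ‖ < 1 ∨ ζ.im ≠ 0) :
    AnalyticAt ℂ discToStrip ζ := by
  obtain ⟨hne, hslit⟩ := cayley_mem_slitPlane hζ
  exact analyticAt_const.mul (((analyticAt_const.add analyticAt_id).div
    (analyticAt_const.sub analyticAt_id) (sub_ne_zero.2 hne.symm)).clog hslit)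

theorem discToStrip_neg {ζ : ℂ} (hζ : ‖ζ‖ < 1 ∨ ζ.im ≠ 0) :
    discToStrip (-ζ) = -discToStrip ζ := by
  rw [discToStrip, sub_neg_eq_add, ← sub_eq_add_neg, ← inv_div, Complex.log_inv _
    (Complex.mem_slitPlane_iff_arg.1 (cayley_mem_slitPlane hζ).2).1, discToStrip]
  ring

variable {θ : ℝ}

theorem sin_half_pos_and_cos_half_pos (hθ : θ ∈ Ioo 0 Real.pi) :
    0 < Real.sin (θ / 2) ∧ 0 < Real.cos (θ / 2) :=
  ⟨Real.sin_pos_of_pos_of_lt_pi (by linarith [hθ.1]) (by linarith [hθ.1, hθ.2]),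
    Real.cos_pos_of_mem_Ioo ⟨by linarith [hθ.1, Real.pi_pos], by linarith [hθ.2]⟩⟩

theorem cayley_exp_mul_I (hθ : θ ∈ Ioo 0 Real.pi) :
    (1 + Complex.exp (θ * Complex.I)) / (1 - Complex.exp (θ * Complex.I)) =
      ((Real.tan (θ / 2))⁻¹ : ℝ) * Complex.I := by
  obtain ⟨hsin, hcos⟩ := sin_half_pos_and_cos_half_pos hθ
  set s := Real.sin (θ / 2)
  set k := Real.cos (θ / 2)
  have hs : (s : ℂ) ≠ 0 := by exact_mod_cast hsin.ne'
  have hpyth : (s : ℂ) ^ 2 + (k : ℂ) ^ 2 = 1 := by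
    exact_mod_cast Real.sin_sq_add_cos_sq (θ / 2)
  have hexp : Complex.exp (θ * Complex.I) = (k + s * Complex.I) ^ 2 := by
    rw [Complex.ofReal_cos, Complex.ofReal_sin, ← Complex.exp_mul_I, ← Complex.exp_nat_mul]
    push_cast
    ring_nf
  have hnum : 1 + Complex.exp (θ * Complex.I) = 2 * k * (k + s * Complex.I) := by
    rw [hexp]
    linear_combination (-1 : ℂ) * hpyth + (s : ℂ) ^ 2 * Complex.I_sq
  have hden : 1 - Complex.exp (θ * Complex.I) = -2 * s * Complex.I * (k + s * Complex.I) := by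
    rw [hexp]
    linear_combination (-1 : ℂ) * hpyth + (s : ℂ) ^ 2 * Complex.I_sq
  have hne : (k : ℂ) + s * Complex.I ≠ 0 := fun h => by
    rw [h, zero_pow two_ne_zero] at hexp
    exact Complex.exp_ne_zero _ hexp
  rw [hnum, hden, Real.tan_eq_sin_div_cos, inv_div, Complex.ofReal_div, div_mul_eq_mul_div,
    div_eq_div_iff (by simp [hs, hne]) hs]
  linear_combination (2 : ℂ) * k * s * (k + s * Complex.I) * Complex.I_sq

theorem tan_half_pos (hθ : θ ∈ Ioo 0 Real.pi) : 0 < Real.tan (θ / 2) := by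
  rw [Real.tan_eq_sin_div_cos]
  exact div_pos (sin_half_pos_and_cos_half_pos hθ).1 (sin_half_pos_and_cos_half_pos hθ).2

theorem discToStrip_exp_mul_I (hθ : θ ∈ Ioo 0 Real.pi) :
    discToStrip (Complex.exp (θ * Complex.I)) =
      (Real.pi / 2 : ℝ) + (Real.log (Real.tan (θ / 2)) : ℝ) * Complex.I := by
  rw [discToStrip, cayley_exp_mul_I hθ,
    Complex.log_ofReal_mul (inv_pos.2 (tan_half_pos hθ)) Complex.I_ne_zero, Complex.log_I,
    Real.log_inv]
  push_cast
  linear_combination (-(Real.pi : ℂ) / 2) * Complex.I_sq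

theorem hasDerivAt_log_tan_half (hθ : θ ∈ Ioo 0 Real.pi) :
    HasDerivAt (fun θ : ℝ => Real.log (Real.tan (θ / 2))) (Real.sin θ)⁻¹ θ := by
  obtain ⟨hsin, hcos⟩ := sin_half_pos_and_cos_half_pos hθ
  have htan : HasDerivAt (fun θ : ℝ => Real.tan (θ / 2))
      (1 / Real.cos (θ / 2) ^ 2 * (1 / 2)) θ :=
    HasDerivAt.comp (h := fun θ : ℝ => θ / 2) θ (Real.hasDerivAt_tan hcos.ne')
      ((hasDerivAt_id' θ).div_const 2)
  refine (htan.log (tan_half_pos hθ).ne').congr_deriv ?_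
  have htwo : Real.sin θ = 2 * Real.sin (θ / 2) * Real.cos (θ / 2) := by
    rw [← Real.sin_two_mul, mul_div_cancel₀ θ two_ne_zero]
  rw [htwo, Real.tan_eq_sin_div_cos]
  field_simp

end DiscToStrip

section TwoSlices

variable {g : ℝ → ℝ} {a y : ℝ}

theorem setIntegral_sq_comp_log_tan_div_sin_le (ha : a ≠ 0) (hg : Integrable fun x => g x ^ 2) :
    IntegrableOn (fun θ => g (y + a * Real.log (Real.tan (θ / 2))) ^ 2 / Real.sin θ)
        (Ioo 0 Real.pi) ∧
      ∫ θ in Ioo 0 Real.pi, g (y + a * Real.log (Real.tan (θ / 2))) ^ 2 / Real.sin θ ≤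
        (∫ x, g x ^ 2) / |a| := by
  set Y : ℝ → ℝ := fun θ => y + a * Real.log (Real.tan (θ / 2))
  have hsin : ∀ θ ∈ Ioo 0 Real.pi, 0 < Real.sin θ := fun θ hθ =>
    Real.sin_pos_of_pos_of_lt_pi hθ.1 hθ.2
  have hderiv : ∀ θ ∈ Ioo 0 Real.pi, HasDerivWithinAt Y (a * (Real.sin θ)⁻¹) (Ioo 0 Real.pi) θ :=
    fun θ hθ => (((hasDerivAt_log_tan_half hθ).const_mul a).const_add y).hasDerivWithinAt
  have hlog : StrictMonoOn (fun θ : ℝ => Real.log (Real.tan (θ / 2))) (Ioo 0 Real.pi) := by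
    refine strictMonoOn_of_deriv_pos (convex_Ioo _ _)
      (fun θ hθ => (hasDerivAt_log_tan_half hθ).continuousAt.continuousWithinAt) fun θ hθ => ?_
    rw [interior_Ioo] at hθ
    rw [(hasDerivAt_log_tan_half hθ).deriv]
    exact inv_pos.2 (hsin θ hθ)
  have hinj : InjOn Y (Ioo 0 Real.pi) := fun θ hθ φ hφ h =>
    hlog.injOn hθ hφ (mul_left_cancel₀ ha (add_left_cancel h))
  have hjac : EqOn (fun θ => |a|⁻¹ * (|a * (Real.sin θ)⁻¹| • g (Y θ) ^ 2))
      (fun θ => g (Y θ) ^ 2 / Real.sin θ) (Ioo 0 Real.pi) := fun θ hθ => by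
    have ha' : |a| ≠ 0 := abs_ne_zero.2 ha
    have := (hsin θ hθ).ne'
    simp only [abs_mul, abs_inv, abs_of_pos (hsin θ hθ), smul_eq_mul]
    field_simp
  refine ⟨IntegrableOn.congr_fun (((integrableOn_image_iff_integrableOn_abs_deriv_smul
    measurableSet_Ioo hderiv hinj fun x => g x ^ 2).1 hg.integrableOn).const_mul |a|⁻¹) hjac
    measurableSet_Ioo, ?_⟩
  rw [← setIntegral_congr_fun measurableSet_Ioo hjac, integral_const_mul,
    ← integral_image_eq_integral_abs_deriv_smul measurableSet_Ioo hderiv hinj fun x => g x ^ 2,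
    inv_mul_eq_div]
  exact div_le_div_of_nonneg_right
    (setIntegral_le_integral hg (.of_forall fun x => sq_nonneg _)) (abs_nonneg a)

/- Cauchy-Schwarz against the weight `sin θ`, the reciprocal of the Jacobian of
`θ ↦ log (tan (θ / 2))`; it is obtained from `2 k g ≤ k² sin θ + g² / sin θ` with `k` half the
integral. -/
theorem sq_integral_comp_log_tan_le (ha : a ≠ 0) (hg0 : ∀ x, 0 ≤ g x)
    (hg : Integrable fun x => g x ^ 2) :
    (∫ θ in (0 : ℝ)..Real.pi, g (y + a * Real.log (Real.tan (θ / 2)))) ^ 2 ≤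
      2 / |a| * ∫ x, g x ^ 2 := by
  obtain ⟨hint, hle⟩ := setIntegral_sq_comp_log_tan_div_sin_le (y := y) ha hg
  set G : ℝ → ℝ := fun θ => g (y + a * Real.log (Real.tan (θ / 2)))
  rw [intervalIntegral.integral_of_le Real.pi_pos.le, integral_Ioc_eq_integral_Ioo]
  set k := (∫ θ in Ioo 0 Real.pi, G θ) / 2 with hk
  have hk0 : 0 ≤ k := div_nonneg (integral_nonneg fun _ => hg0 _) two_pos.le
  have hsinInt : IntegrableOn Real.sin (Ioo 0 Real.pi) :=
    Real.continuous_sin.integrableOn_Icc.mono_set Ioo_subset_Icc_self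
  have hsin : ∫ θ in Ioo 0 Real.pi, Real.sin θ = 2 := by
    rw [← integral_Ioc_eq_integral_Ioo, ← intervalIntegral.integral_of_le Real.pi_pos.le,
      integral_sin]
    norm_num
  have hyoung : ∫ θ in Ioo 0 Real.pi, 2 * k * G θ ≤
      ∫ θ in Ioo 0 Real.pi, (k ^ 2 * Real.sin θ + G θ ^ 2 / Real.sin θ) := by
    refine integral_mono_of_nonneg (.of_forall fun θ => mul_nonneg (by positivity) (hg0 _))
      ((hsinInt.const_mul _).add hint) ((ae_restrict_iff' measurableSet_Ioo).2
        (.of_forall fun θ hθ => ?_))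
    have hs : 0 < Real.sin θ := Real.sin_pos_of_pos_of_lt_pi hθ.1 hθ.2
    have hsq : k ^ 2 * Real.sin θ + G θ ^ 2 / Real.sin θ - 2 * k * G θ =
        (k * Real.sin θ - G θ) ^ 2 / Real.sin θ := by
      field_simp
      ring
    exact sub_nonneg.1 (hsq ▸ by positivity)
  rw [integral_const_mul, integral_add (hsinInt.const_mul _) hint, integral_const_mul,
    hsin] at hyoung
  have hI : ∫ θ in Ioo 0 Real.pi, G θ = 2 * k := by rw [hk]; ring
  rw [hI] at hyoung ⊢
  calc (2 * k) ^ 2 = 2 * (2 * k * (2 * k) - k ^ 2 * 2) := by ring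
    _ ≤ 2 * ((∫ x, g x ^ 2) / |a|) := by linarith
    _ = 2 / |a| * ∫ x, g x ^ 2 := by ring

variable {w : ℂ → ℝ} {z : ℂ} {M δ : ℝ}

theorem add_mul_discToStrip_circleMap {θ : ℝ} (hθ : θ ∈ Ioo 0 Real.pi) :
    z + (2 * δ / Real.pi : ℝ) * discToStrip (circleMap 0 1 θ) = (z.re + δ : ℝ) +
      (z.im + 2 * δ / Real.pi * Real.log (Real.tan (θ / 2)) : ℝ) * Complex.I := by
  have hpi : (Real.pi : ℂ) ≠ 0 := by exact_mod_cast Real.pi_ne_zero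
  rw [circleMap_zero, Complex.ofReal_one, one_mul, discToStrip_exp_mul_I hθ]
  push_cast
  field_simp
  linear_combination (-(Real.pi : ℂ)) * Complex.re_add_im z

theorem add_mul_discToStrip_circleMap_add_pi {θ : ℝ} (hθ : θ ∈ Ioo 0 Real.pi) :
    z + (2 * δ / Real.pi : ℝ) * discToStrip (circleMap 0 1 (θ + Real.pi)) = (z.re - δ : ℝ) +
      (z.im + -(2 * δ / Real.pi) * Real.log (Real.tan (θ / 2)) : ℝ) * Complex.I := by
  have hneg : circleMap 0 1 (θ + Real.pi) = -Complex.exp (θ * Complex.I) := by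
    simp [circleMap, add_mul, Complex.exp_add]
  rw [hneg, discToStrip_neg (.inr (by
    rw [Complex.exp_ofReal_mul_I_im]
    exact (Real.sin_pos_of_pos_of_lt_pi hθ.1 hθ.2).ne'))]
  have h := add_mul_discToStrip_circleMap (z := z) (δ := -δ) hθ
  rw [circleMap_zero, Complex.ofReal_one, one_mul] at h
  convert h using 2 <;> push_cast <;> ring

theorem ae_sin_ne_zero : ∀ᵐ θ : ℝ, Real.sin θ ≠ 0 := by
  filter_upwards [(countable_range fun n : ℤ => (n : ℝ) * Real.pi).ae_notMem volume] with θ hθ h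
  exact hθ (Real.sin_eq_zero_iff.1 h)

theorem abs_add_mul_discToStrip_re_sub_le (hδ : 0 ≤ δ) {ζ : ℂ} (hζ : ‖ζ‖ ≤ 1) :
    |(z + (2 * δ / Real.pi : ℝ) * discToStrip ζ).re - z.re| ≤ δ := by
  rw [Complex.add_re, add_sub_cancel_left, Complex.re_ofReal_mul, abs_mul,
    abs_of_nonneg (by positivity)]
  calc 2 * δ / Real.pi * |(discToStrip ζ).re| ≤ 2 * δ / Real.pi * (Real.pi / 2) := by
        gcongr
        exact abs_discToStrip_re_le hζ
    _ = δ := by field_simp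

theorem aestronglyMeasurable_of_ae_continuousAt {X Y : Type*} [TopologicalSpace X]
    [MeasurableSpace X] [OpensMeasurableSpace X] [PseudoEMetricSpace Y]
    [SecondCountableTopologyEither X Y] {f : X → Y} {μ : Measure X}
    (hf : ∀ᵐ x ∂μ, ContinuousAt f x) : AEStronglyMeasurable f μ := by
  have hcont : ContinuousOn f {x | ContinuousAt f x} := fun x hx => hx.continuousWithinAt
  rw [← Measure.restrict_eq_self_of_ae_mem (s := {x | ContinuousAt f x}) hf]
  exact hcont.aestronglyMeasurable (measurableSet_of_continuousAt f)

theorem intervalIntegrable_of_ae_continuousAt {f : ℝ → ℝ} (hf : ∀ᵐ x, ContinuousAt f x)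
    (hM : ∀ x, |f x| ≤ M) (s t : ℝ) : IntervalIntegrable f volume s t :=
  (intervalIntegrable_const (c := M)).mono_fun'
    (aestronglyMeasurable_of_ae_continuousAt hf).restrict (.of_forall hM)

/- Map the unit disc onto the strip `|re (p - z)| < δ` with `0 ↦ z`: the upper and lower half
circles go to the lines of abscissa `re z + δ` and `re z - δ`. -/
theorem two_pi_mul_le_integral_add_integral (hδ : 0 < δ) (hM : ∀ p, |w p| ≤ M)
    (hw : ∀ p : ℂ, |p.re - z.re| ≤ δ → SubharmonicAt w p) :
    2 * Real.pi * w z ≤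
      (∫ θ in (0 : ℝ)..Real.pi, w ((z.re + δ : ℝ) +
        (z.im + 2 * δ / Real.pi * Real.log (Real.tan (θ / 2)) : ℝ) * Complex.I)) +
      ∫ θ in (0 : ℝ)..Real.pi, w ((z.re - δ : ℝ) +
        (z.im + -(2 * δ / Real.pi) * Real.log (Real.tan (θ / 2)) : ℝ) * Complex.I) := by
  have hpi := Real.pi_pos
  set V : ℂ → ℝ := fun ζ => w (z + (2 * δ / Real.pi : ℝ) * discToStrip ζ) with hV
  have hcont : ∀ᵐ θ : ℝ, ContinuousAt V (circleMap 0 1 θ) := by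
    filter_upwards [ae_sin_ne_zero] with θ hθ
    refine ContinuousAt.comp (g := w)
      (hw _ (abs_add_mul_discToStrip_re_sub_le hδ.le (by simp))).1.continuousAt ?_
    exact continuousAt_const.add (continuousAt_const.mul
      (analyticAt_discToStrip (.inr (by simpa [circleMap_zero] using hθ))).continuousAt)
  have hmean : V 0 ≤ Real.circleAverage V 0 1 := by
    refine le_circleAverage_of_ae_continuousAt one_pos (fun ζ hζ => ?_) (fun ζ _ => hM _) hcont
    rw [mem_ball_zero_iff] at hζ
    refine SubharmonicAt.comp_analyticAt (Ψ := fun ζ => z + (2 * δ / Real.pi : ℝ) * discToStrip ζ)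
      (hw _ (abs_add_mul_discToStrip_re_sub_le hδ.le hζ.le)) ?_
    exact analyticAt_const.add (analyticAt_const.mul (analyticAt_discToStrip (.inl hζ)))
  have hint := intervalIntegrable_of_ae_continuousAt (f := fun θ => V (circleMap 0 1 θ))
    (hcont.mono fun θ hθ => hθ.comp (continuous_circleMap 0 1).continuousAt) fun θ => hM _
  calc 2 * Real.pi * w z ≤ 2 * Real.pi * Real.circleAverage V 0 1 := by
        gcongr
        simpa [hV, discToStrip_zero] using hmean
    _ = (∫ θ in (0 : ℝ)..Real.pi, V (circleMap 0 1 θ)) +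
        ∫ θ in (0 : ℝ)..Real.pi, V (circleMap 0 1 (θ + Real.pi)) := by
      rw [Real.circleAverage_def, smul_eq_mul, mul_inv_cancel_left₀ (by positivity),
        intervalIntegral.integral_comp_add_right (fun θ => V (circleMap 0 1 θ)), zero_add,
        ← two_mul, intervalIntegral.integral_add_adjacent_intervals (hint _ _) (hint _ _)]
    _ = _ := congrArg₂ (· + ·)
      (intervalIntegral.integral_congr_Ioo_of_le hpi.le fun θ hθ =>
        congrArg w (add_mul_discToStrip_circleMap hθ))
      (intervalIntegral.integral_congr_Ioo_of_le hpi.le fun θ hθ =>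
        congrArg w (add_mul_discToStrip_circleMap_add_pi hθ))

theorem two_pi_mul_le_sqrt_add_sqrt (hδ : 0 < δ) (h0 : ∀ p, 0 ≤ w p) (hM : ∀ p, w p ≤ M)
    (hw : ∀ p : ℂ, |p.re - z.re| ≤ δ → SubharmonicAt w p)
    (hminus : Integrable fun y : ℝ => w ((z.re - δ : ℝ) + y * Complex.I) ^ 2)
    (hplus : Integrable fun y : ℝ => w ((z.re + δ : ℝ) + y * Complex.I) ^ 2) :
    2 * Real.pi * w z ≤
      √(Real.pi / δ * ∫ y : ℝ, w ((z.re + δ : ℝ) + y * Complex.I) ^ 2) +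
      √(Real.pi / δ * ∫ y : ℝ, w ((z.re - δ : ℝ) + y * Complex.I) ^ 2) := by
  have hslope : 0 < 2 * δ / Real.pi := by have := Real.pi_pos; positivity
  have htwo_div : 2 / |2 * δ / Real.pi| = Real.pi / δ := by
    rw [abs_of_pos hslope]
    field_simp
  refine (two_pi_mul_le_integral_add_integral hδ
    (fun p => (abs_of_nonneg (h0 p)).trans_le (hM p)) hw).trans
      (add_le_add (Real.le_sqrt_of_sq_le ?_) (Real.le_sqrt_of_sq_le ?_))
  · rw [← htwo_div]
    exact sq_integral_comp_log_tan_le (g := fun y => w ((z.re + δ : ℝ) + y * Complex.I))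
      hslope.ne' (fun _ => h0 _) hplus
  · rw [← htwo_div, ← abs_neg]
    exact sq_integral_comp_log_tan_le (g := fun y => w ((z.re - δ : ℝ) + y * Complex.I))
      (neg_ne_zero.2 hslope.ne') (fun _ => h0 _) hminus

end TwoSlices

section Comparison

variable {f g f' g' : ℝ → ℝ} {a b t : ℝ}

theorem sub_le_sub_of_hasDerivAt_le (hab : a ≤ b) (hf : ∀ x ∈ Icc a b, HasDerivAt f (f' x) x)
    (hg : ∀ x ∈ Icc a b, HasDerivAt g (g' x) x) (hle : ∀ x ∈ Icc a b, f' x ≤ g' x) :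
    f b - f a ≤ g b - g a := by
  have hd : ∀ x ∈ Icc a b, HasDerivAt (g - f) (g' x - f' x) x := fun x hx =>
    (hg x hx).sub (hf x hx)
  have hmono : MonotoneOn (g - f) (Icc a b) :=
    monotoneOn_of_hasDerivWithinAt_nonneg (convex_Icc a b) (HasDerivAt.continuousOn hd)
      (fun x hx => (hd x (interior_subset hx)).hasDerivWithinAt)
      fun x hx => sub_nonneg.2 (hle x (interior_subset hx))
  have := hmono (left_mem_Icc.2 hab) (right_mem_Icc.2 hab) hab
  simp only [Pi.sub_apply] at this
  linarith

theorem nonpos_of_monotoneOn_deriv_mul (hf : ∀ x ∈ Icc a b, HasDerivAt f (f' x) x)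
    (hg : ∀ x ∈ Icc a b, 0 < g x) (hmono : MonotoneOn (fun x => f' x * g x) (Icc a b))
    (ha : f a ≤ 0) (hb : f b ≤ 0) (ht : t ∈ Icc a b) : f t ≤ 0 := by
  by_contra! hpos
  have hat : a < t := ht.1.lt_of_ne (by rintro rfl; linarith)
  have htb : t < b := ht.2.lt_of_ne (by rintro rfl; linarith)
  have hcont : ContinuousOn f (Icc a b) := HasDerivAt.continuousOn hf
  obtain ⟨x, hx, hfx⟩ := exists_hasDerivAt_eq_slope f f' hat
    (hcont.mono (Icc_subset_Icc_right ht.2)) fun x hx => hf x ⟨hx.1.le, hx.2.le.trans ht.2⟩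
  obtain ⟨y, hy, hfy⟩ := exists_hasDerivAt_eq_slope f f' htb
    (hcont.mono (Icc_subset_Icc_left ht.1)) fun x hx => hf x ⟨ht.1.trans hx.1.le, hx.2.le⟩
  have hfx_pos : 0 < f' x := hfx ▸ div_pos (by linarith) (by linarith)
  have hfy_neg : f' y < 0 := hfy ▸ div_neg_of_neg_of_pos (by linarith) (by linarith)
  have hxI : x ∈ Icc a b := ⟨hx.1.le, (hx.2.trans htb).le⟩
  have hyI : y ∈ Icc a b := ⟨(hat.trans hy.1).le, hy.2.le⟩
  have hle : f' x * g x ≤ f' y * g y := hmono hxI hyI (hx.2.trans hy.1).le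
  have hxg := mul_pos hfx_pos (hg x hxI)
  have hyg := mul_neg_of_neg_of_pos hfy_neg (hg y hyI)
  linarith

end Comparison

section Distortion

/-- The Ahlfors distortion integral `∫ dx / a x` over `[s, t]`, where `π * a x` bounds the width of
a strip at abscissa `x`. -/
noncomputable def distortionIntegral (a : ℝ → ℝ) (s t : ℝ) : ℝ := ∫ x in s..t, 1 / a x

/-- The comparison solution `E` for the energy inequality on `[t₁, T]`: it solves
`E'' + (2 / a) E' = 0` with `E' = -exp (-2 τ)` and `E T = exp (-2 τ T)`, where `τ` is the distortion
integral from `t₁`. -/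
noncomputable def energyMajorant (a : ℝ → ℝ) (t₁ T t : ℝ) : ℝ :=
  (∫ s in t..T, Real.exp (-2 * distortionIntegral a t₁ s)) +
    Real.exp (-2 * distortionIntegral a t₁ T)

/-- Admissible bounds for the opening of a strip, in units of `π`. In the variable `r = exp t`, the
last condition says that `a / r` is decreasing. -/
structure OpeningMajorant (a : ℝ → ℝ) : Prop where
  continuous : Continuous a
  pos : ∀ t, 0 < a t
  le_two : ∀ t, a t ≤ 2
  monotone : Monotone a
  le_mul_exp : ∀ ⦃s t⦄, s ≤ t → a t ≤ a s * Real.exp (t - s)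

theorem distortionIntegral_self (a : ℝ → ℝ) (t : ℝ) : distortionIntegral a t t = 0 :=
  intervalIntegral.integral_same

theorem energyMajorant_self (a : ℝ → ℝ) (t₁ T : ℝ) :
    energyMajorant a t₁ T T = Real.exp (-2 * distortionIntegral a t₁ T) := by
  simp [energyMajorant]

end Distortion

namespace OpeningMajorant

variable {a : ℝ → ℝ} {s t t₁ T : ℝ}

theorem continuous_one_div (ha : OpeningMajorant a) : Continuous fun t => 1 / a t :=
  continuous_const.div ha.continuous fun t => (ha.pos t).ne'

theorem hasDerivAt_distortionIntegral (ha : OpeningMajorant a) (s t : ℝ) :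
    HasDerivAt (distortionIntegral a s) (1 / a t) t :=
  intervalIntegral.integral_hasDerivAt_right (ha.continuous_one_div.intervalIntegrable _ _)
    (ha.continuous_one_div.stronglyMeasurableAtFilter _ _) ha.continuous_one_div.continuousAt

theorem continuous_distortionIntegral_left (ha : OpeningMajorant a) (t : ℝ) :
    Continuous fun s => distortionIntegral a s t :=
  continuous_iff_continuousAt.2 fun s => (intervalIntegral.integral_hasDerivAt_left
    (ha.continuous_one_div.intervalIntegrable s t)
    (ha.continuous_one_div.stronglyMeasurableAtFilter _ _)
    ha.continuous_one_div.continuousAt).continuousAt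

theorem hasDerivAt_exp_neg_two_mul_distortionIntegral (ha : OpeningMajorant a) (s t : ℝ) :
    HasDerivAt (fun t => Real.exp (-2 * distortionIntegral a s t))
      (-(2 / a t) * Real.exp (-2 * distortionIntegral a s t)) t :=
  ((ha.hasDerivAt_distortionIntegral s t).const_mul (-2)).exp.congr_deriv (by ring)

theorem hasDerivAt_energyMajorant (ha : OpeningMajorant a) (t₁ T t : ℝ) :
    HasDerivAt (energyMajorant a t₁ T) (-Real.exp (-2 * distortionIntegral a t₁ t)) t := by
  have hcont : Continuous fun s => Real.exp (-2 * distortionIntegral a t₁ s) :=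
    continuous_iff_continuousAt.2 fun s =>
      (ha.hasDerivAt_exp_neg_two_mul_distortionIntegral t₁ s).continuousAt
  exact (intervalIntegral.integral_hasDerivAt_left (hcont.intervalIntegrable _ _)
    (hcont.stronglyMeasurableAtFilter _ _) hcont.continuousAt).add_const _

theorem distortionIntegral_add (ha : OpeningMajorant a) (r s t : ℝ) :
    distortionIntegral a r s + distortionIntegral a s t = distortionIntegral a r t :=
  intervalIntegral.integral_add_adjacent_intervals (ha.continuous_one_div.intervalIntegrable _ _)
    (ha.continuous_one_div.intervalIntegrable _ _)

theorem distortionIntegral_le_sub_div (ha : OpeningMajorant a) (hst : s ≤ t) :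
    distortionIntegral a s t ≤ (t - s) / a s := by
  have hle : distortionIntegral a s t ≤ ∫ _ in s..t, 1 / a s :=
    intervalIntegral.integral_mono_on hst (ha.continuous_one_div.intervalIntegrable _ _)
      intervalIntegrable_const fun x hx => one_div_le_one_div_of_le (ha.pos s) (ha.monotone hx.1)
  simpa [div_eq_mul_inv] using hle

theorem distortionIntegral_le_exp_sub_one_div (ha : OpeningMajorant a) (hst : s ≤ t) :
    distortionIntegral a s t ≤ (Real.exp (t - s) - 1) / a t := by
  have hcont : Continuous fun x => Real.exp (t - x) / a t := by fun_prop
  calc distortionIntegral a s t ≤ ∫ x in s..t, Real.exp (t - x) / a t := by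
        refine intervalIntegral.integral_mono_on hst (ha.continuous_one_div.intervalIntegrable _ _)
          (hcont.intervalIntegrable _ _) fun x hx => ?_
        rw [div_le_div_iff₀ (ha.pos x) (ha.pos t)]
        linarith [ha.le_mul_exp hx.2]
    _ = (Real.exp (t - s) - 1) / a t := by simp

theorem half_sub_le_distortionIntegral (ha : OpeningMajorant a) (hst : s ≤ t) :
    (t - s) / 2 ≤ distortionIntegral a s t := by
  have hle : (∫ _ in s..t, (1 / 2 : ℝ)) ≤ distortionIntegral a s t :=
    intervalIntegral.integral_mono_on hst intervalIntegrable_const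
      (ha.continuous_one_div.intervalIntegrable _ _)
      fun x _ => one_div_le_one_div_of_le (ha.pos x) (ha.le_two x)
  simpa [div_eq_mul_inv] using hle

theorem sub_sub_sq_div_le_distortionIntegral (ha : OpeningMajorant a) (hst : s ≤ t) :
    ((t - s) - (t - s) ^ 2 / 2) / a s ≤ distortionIntegral a s t := by
  have hcont : Continuous fun x => (1 - (x - s)) / a s := by fun_prop
  calc ((t - s) - (t - s) ^ 2 / 2) / a s = ∫ x in s..t, (1 - (x - s)) / a s := by
        rw [intervalIntegral.integral_div, intervalIntegral.integral_comp_sub_right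
          (fun u => 1 - u), sub_self, intervalIntegral.integral_sub intervalIntegrable_const
            intervalIntegral.intervalIntegrable_id, integral_one, integral_id]
        ring
    _ ≤ distortionIntegral a s t := by
        refine intervalIntegral.integral_mono_on hst (hcont.intervalIntegrable _ _)
          (ha.continuous_one_div.intervalIntegrable _ _) fun x hx => ?_
        have hexp : 1 - (x - s) ≤ Real.exp (-(x - s)) := by
          linarith [Real.add_one_le_exp (-(x - s))]
        rw [div_le_div_iff₀ (ha.pos s) (ha.pos x), one_mul]
        calc (1 - (x - s)) * a x ≤ Real.exp (-(x - s)) * (a s * Real.exp (x - s)) := by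
              gcongr
              · exact (ha.pos x).le
              · exact ha.le_mul_exp hx.1
          _ = a s := by rw [mul_left_comm, ← Real.exp_add]; simp

theorem energyMajorant_le_exp (ha : OpeningMajorant a) (htT : t ≤ T) :
    energyMajorant a t₁ T t ≤ Real.exp (-2 * distortionIntegral a t₁ t) := by
  have hle := sub_le_sub_of_hasDerivAt_le htT
    (fun x _ => ha.hasDerivAt_exp_neg_two_mul_distortionIntegral t₁ x)
    (fun x _ => ha.hasDerivAt_energyMajorant t₁ T x) fun x _ => by
      have : 1 ≤ 2 / a x := (one_le_div (ha.pos x)).2 (ha.le_two x)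
      nlinarith [Real.exp_pos (-2 * distortionIntegral a t₁ x)]
  rw [energyMajorant_self] at hle
  linarith

/- The barrier `a t * exp (s - t) * exp (-2 τ s)` dominates the energy majorant as long as
`a t * exp (s - t) ≤ 1`, that is, up to `s = t - log (a t)`. -/
theorem energyMajorant_le_mul_exp (ha : OpeningMajorant a) (htT : t ≤ T)
    (hT : t - Real.log (a t) ≤ T) :
    energyMajorant a t₁ T t ≤ a t * Real.exp (-2 * distortionIntegral a t₁ t) := by
  rcases le_total 1 (a t) with hone | hone
  · exact (ha.energyMajorant_le_exp htT).trans (le_mul_of_one_le_left (Real.exp_pos _).le hone)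
  have hlog : Real.log (a t) ≤ 0 := Real.log_nonpos (ha.pos t).le hone
  have hle := sub_le_sub_of_hasDerivAt_le (show t ≤ t - Real.log (a t) by linarith)
    (fun s _ => ((((hasDerivAt_id s).sub_const t).exp.const_mul (a t)).mul
      (ha.hasDerivAt_exp_neg_two_mul_distortionIntegral t₁ s)))
    (fun s _ => ha.hasDerivAt_energyMajorant t₁ T s) fun s hs => by
      have hm : a t * Real.exp (s - t) ≤ 1 := by
        calc a t * Real.exp (s - t) = Real.exp (Real.log (a t) + (s - t)) := by
              rw [Real.exp_add, Real.exp_log (ha.pos t)]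
          _ ≤ 1 := Real.exp_le_one_iff.2 (by linarith [hs.2])
      have hm' : 1 ≤ a t * Real.exp (s - t) / a s :=
        (one_le_div (ha.pos s)).2 (ha.le_mul_exp hs.1)
      have := mul_le_mul_of_nonneg_right
        (show a t * Real.exp (s - t) - 2 * (a t * Real.exp (s - t) / a s) ≤ -1 by linarith)
        (Real.exp_pos (-2 * distortionIntegral a t₁ s)).le
      simp only [id]
      linear_combination this
  have hend := ha.energyMajorant_le_exp (t₁ := t₁) hT
  have hunit : a t * Real.exp (t - Real.log (a t) - t) = 1 := by
    rw [sub_sub_cancel_left, Real.exp_neg, Real.exp_log (ha.pos t), mul_inv_cancel₀ (ha.pos t).ne']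
  simp only [Pi.mul_apply, id, hunit, sub_self, Real.exp_zero, mul_one, one_mul] at hle
  linarith

theorem half_le_energyMajorant (ha : OpeningMajorant a) (ht : t₁ ≤ T) :
    a t₁ / 2 ≤ energyMajorant a t₁ T t₁ := by
  have hle := sub_le_sub_of_hasDerivAt_le ht
    (fun x _ => ha.hasDerivAt_energyMajorant t₁ T x)
    (fun x _ => (ha.hasDerivAt_exp_neg_two_mul_distortionIntegral t₁ x).const_mul (a t₁ / 2))
    fun x hx => by
      have : a t₁ / a x ≤ 1 := (div_le_one (ha.pos x)).2 (ha.monotone hx.1)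
      have := mul_le_mul_of_nonneg_right this (Real.exp_pos (-2 * distortionIntegral a t₁ x)).le
      linear_combination this
  rw [energyMajorant_self, distortionIntegral_self, mul_zero, Real.exp_zero, mul_one] at hle
  nlinarith [ha.le_two t₁, Real.exp_pos (-2 * distortionIntegral a t₁ T)]

theorem le_two_pi_mul_energyMajorant {A A' A'' : ℝ → ℝ} (ha : OpeningMajorant a)
    (hA : ∀ t ∈ Icc t₁ T, HasDerivAt A (A' t) t) (hA' : ∀ t ∈ Icc t₁ T, HasDerivAt A' (A'' t) t)
    (hineq : ∀ t ∈ Icc t₁ T, 0 ≤ A'' t + 2 / a t * A' t)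
    (hleft : A t₁ ≤ Real.pi * a t₁) (hright : A T ≤ 0) (ht : t ∈ Icc t₁ T) :
    A t ≤ 2 * Real.pi * energyMajorant a t₁ T t := by
  have hmono :
      MonotoneOn (fun x => A' x * Real.exp (2 * distortionIntegral a t₁ x)) (Icc t₁ T) := by
    have hd : ∀ x ∈ Icc t₁ T, HasDerivAt
        (fun x => A' x * Real.exp (2 * distortionIntegral a t₁ x))
        ((A'' x + 2 / a x * A' x) * Real.exp (2 * distortionIntegral a t₁ x)) x := fun x hx =>
      ((hA' x hx).mul ((ha.hasDerivAt_distortionIntegral t₁ x).const_mul 2).exp).congr_deriv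
        (by ring)
    exact monotoneOn_of_hasDerivWithinAt_nonneg (convex_Icc t₁ T) (HasDerivAt.continuousOn hd)
      (fun x hx => (hd x (interior_subset hx)).hasDerivWithinAt)
      fun x hx => mul_nonneg (hineq x (interior_subset hx)) (Real.exp_pos _).le
  have hweight (x : ℝ) : (A' x - 2 * Real.pi * -Real.exp (-2 * distortionIntegral a t₁ x)) *
      Real.exp (2 * distortionIntegral a t₁ x) =
      A' x * Real.exp (2 * distortionIntegral a t₁ x) + 2 * Real.pi := by
    rw [neg_mul, Real.exp_neg]
    field_simp
    ring
  have hT : 0 < energyMajorant a t₁ T T := by rw [energyMajorant_self]; exact Real.exp_pos _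
  refine sub_nonpos.1 (nonpos_of_monotoneOn_deriv_mul
    (f := fun x => A x - 2 * Real.pi * energyMajorant a t₁ T x) (fun x hx => (hA x hx).sub
      ((ha.hasDerivAt_energyMajorant t₁ T x).const_mul (2 * Real.pi)))
    (fun x _ => Real.exp_pos (2 * distortionIntegral a t₁ x)) ?_ ?_ ?_ ht)
  · simp only [hweight]
    exact hmono.add_const _
  · have := ha.half_le_energyMajorant (ht.1.trans ht.2)
    nlinarith [Real.pi_pos]
  · have := mul_pos Real.two_pi_pos hT
    linarith

end OpeningMajorant

section ExpBounds

theorem two_sub_mul_exp_le {x : ℝ} (hx : 0 ≤ x) : (2 - x) * Real.exp x ≤ 2 + x := by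
  have hle := sub_le_sub_of_hasDerivAt_le hx
    (fun y _ => ((hasDerivAt_id y).const_sub 2).mul (Real.hasDerivAt_exp y))
    (fun y _ => (hasDerivAt_id y).const_add 2) fun y _ => by
      have hone : (1 - y) * Real.exp y ≤ Real.exp (-y) * Real.exp y := by
        gcongr
        linarith [Real.add_one_le_exp (-y)]
      rw [← Real.exp_add, neg_add_cancel, Real.exp_zero] at hone
      simp only [id]
      linarith
  simp only [Pi.mul_apply, id, Real.exp_zero] at hle
  linarith

theorem exp_sub_one_le_mul_exp (x : ℝ) : Real.exp x - 1 ≤ x * Real.exp x := by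
  have hone : (1 - x) * Real.exp x ≤ Real.exp (-x) * Real.exp x := by
    gcongr
    linarith [Real.add_one_le_exp (-x)]
  rw [← Real.exp_add, neg_add_cancel, Real.exp_zero] at hone
  linarith

theorem exp_le_one_add_mul {x : ℝ} (h0 : 0 ≤ x) (h1 : x ≤ 1) :
    Real.exp x ≤ 1 + (Real.exp 1 - 1) * x := by
  have := convexOn_exp.2 (mem_univ 0) (mem_univ 1) (sub_nonneg.2 h1) h0 (sub_add_cancel 1 x)
  simp only [smul_eq_mul, mul_zero, mul_one, zero_add, Real.exp_zero] at this
  linarith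

theorem exp_neg_eighth_le : Real.exp (-1 / 8) ≤ 0.883 := by
  have hpow : Real.exp (-1 / 8) ^ 8 = Real.exp (-1) := by rw [← Real.exp_nat_mul]; norm_num
  refine le_of_pow_le_pow_left₀ (n := 8) (by norm_num) (by norm_num) ?_
  linarith [Real.exp_neg_one_lt_d9]

theorem exp_half_add_exp_neg_eighth_le : Real.exp (1 / 2) + Real.exp (-1 / 8) ≤ 8 / Real.pi := by
  have hsq : Real.exp (1 / 2) ^ 2 = Real.exp 1 := by rw [← Real.exp_nat_mul]; norm_num
  have hhalf : Real.exp (1 / 2) ≤ 1.6488 :=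
    le_of_sq_le_sq (by linarith [Real.exp_one_lt_d9]) (by norm_num)
  rw [le_div_iff₀ Real.pi_pos]
  nlinarith [exp_neg_eighth_le, Real.pi_lt_d4, Real.pi_pos]

theorem exp_seven_eighths_le : Real.exp (7 / 8) ≤ 8 / Real.pi := by
  have hexp : Real.exp (7 / 8) ≤ 2.5 := by
    rw [show (7 / 8 : ℝ) = 1 + -1 / 8 by norm_num, Real.exp_add]
    nlinarith [exp_neg_eighth_le, Real.exp_one_lt_d9, Real.exp_pos 1, Real.exp_pos (-1 / 8)]
  rw [le_div_iff₀ Real.pi_pos]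
  nlinarith [Real.pi_lt_d4, Real.pi_pos]

end ExpBounds

namespace OpeningMajorant

variable {a : ℝ → ℝ} {s t t₁ T : ℝ}

/- With `R = log (a t / a s)`, the integrand is at most `1 / a s` on `[s, t - R]` and at most
`exp (t - x) / a t` on `[t - R, t]`; the two bounds agree at `t - R`. -/
theorem two_mul_distortionIntegral_sub_half_le (ha : OpeningMajorant a) (t : ℝ) :
    2 * distortionIntegral a (t - a t / 2) t ≤ 1 + Real.log (a t / a (t - a t / 2)) := by
  set δ := a t / 2 with hδ
  set R := Real.log (a t / a (t - δ))
  have hat := ha.pos t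
  have has := ha.pos (t - δ)
  have hδ0 : 0 < δ := half_pos hat
  have hδ1 : δ ≤ 1 := by linarith [ha.le_two t]
  have hexpR : Real.exp R = a t / a (t - δ) := Real.exp_log (div_pos hat has)
  have hR0 : 0 ≤ R := Real.log_nonneg ((one_le_div has).2 (ha.monotone (by linarith)))
  have hRδ : R ≤ δ := by
    rw [← Real.exp_le_exp, hexpR, div_le_iff₀ has, mul_comm]
    simpa using ha.le_mul_exp (sub_le_self t hδ0.le)
  have hleft : distortionIntegral a (t - δ) (t - R) ≤ (δ - R) * Real.exp R / a t := by
    refine (ha.distortionIntegral_le_sub_div (by linarith)).trans_eq ?_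
    rw [hexpR]
    field_simp
    ring
  have hright : distortionIntegral a (t - R) t ≤ (Real.exp R - 1) / a t := by
    simpa using ha.distortionIntegral_le_exp_sub_one_div (sub_le_self t hR0)
  have hdecr : (Real.exp R - 1 - R * Real.exp R) / δ ≤ Real.exp R - 1 - R * Real.exp R := by
    rw [div_le_iff₀ hδ0]
    nlinarith [exp_sub_one_le_mul_exp R]
  have hsplit := ha.distortionIntegral_add (t - δ) (t - R) t
  calc 2 * distortionIntegral a (t - δ) t
      ≤ 2 * ((δ - R) * Real.exp R / a t + (Real.exp R - 1) / a t) := by linarith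
    _ = Real.exp R + (Real.exp R - 1 - R * Real.exp R) / δ := by rw [hδ]; field_simp; ring
    _ ≤ 1 + R := by linarith [two_sub_mul_exp_le hR0]

theorem energyMajorant_sub_half_le (ha : OpeningMajorant a) (htT : t ≤ T)
    (hT : t - Real.log (a t) ≤ T) :
    energyMajorant a t₁ T (t - a t / 2) ≤
      a t * Real.exp (-2 * distortionIntegral a t₁ t) * Real.exp 1 := by
  have hbound := ha.two_mul_distortionIntegral_sub_half_le t
  set s := t - a t / 2 with hs
  have hst : s ≤ t := by linarith [ha.pos t]
  have hlog : Real.log (a t) ≤ Real.log (a s) + (t - s) := by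
    rw [← Real.log_exp (t - s), ← Real.log_mul (ha.pos s).ne' (Real.exp_pos _).ne']
    exact Real.log_le_log (ha.pos t) (ha.le_mul_exp hst)
  rw [Real.log_div (ha.pos t).ne' (ha.pos s).ne'] at hbound
  calc energyMajorant a t₁ T s
      ≤ a s * Real.exp (-2 * distortionIntegral a t₁ s) :=
        ha.energyMajorant_le_mul_exp (hst.trans htT) (by linarith)
    _ = Real.exp (Real.log (a s) + -2 * distortionIntegral a t₁ s) := by
        rw [Real.exp_add, Real.exp_log (ha.pos s)]
    _ ≤ Real.exp (Real.log (a t) + -2 * distortionIntegral a t₁ t + 1) :=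
        Real.exp_le_exp.2 (by linarith [ha.distortionIntegral_add t₁ s t])
    _ = _ := by rw [Real.exp_add, Real.exp_add, Real.exp_log (ha.pos t)]

theorem energyMajorant_add_half_le (ha : OpeningMajorant a) (htT : t + a t / 2 ≤ T)
    (hT : t + a t / 2 - Real.log (a t) ≤ T) :
    energyMajorant a t₁ T (t + a t / 2) ≤
      a t * Real.exp (-2 * distortionIntegral a t₁ t) * Real.exp (-1 / 4) := by
  set δ := a t / 2 with hδ
  have hat := ha.pos t
  have hle : t ≤ t + δ := by linarith
  have hadd := ha.distortionIntegral_add t₁ t (t + δ)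
  rw [mul_assoc, ← Real.exp_add]
  rcases le_total (a t) 1 with hone | hone
  · have hlog : Real.log (a t) ≤ Real.log (a (t + δ)) :=
      Real.log_le_log hat (ha.monotone hle)
    have hdist : (1 - δ / 2) / 2 ≤ distortionIntegral a t (t + δ) := by
      refine le_trans (le_of_eq ?_) (ha.sub_sub_sq_div_le_distortionIntegral hle)
      rw [add_sub_cancel_left, hδ]
      field_simp
    calc energyMajorant a t₁ T (t + δ)
        ≤ a (t + δ) * Real.exp (-2 * distortionIntegral a t₁ (t + δ)) :=
          ha.energyMajorant_le_mul_exp htT (by linarith)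
      _ ≤ a t * Real.exp δ * Real.exp (-2 * distortionIntegral a t₁ (t + δ)) := by
          gcongr
          simpa using ha.le_mul_exp hle
      _ ≤ a t * Real.exp (-2 * distortionIntegral a t₁ t + -1 / 4) := by
          rw [mul_assoc, ← Real.exp_add]
          exact mul_le_mul_of_nonneg_left (Real.exp_le_exp.2 (by linarith)) hat.le
  · have hdist : δ / 2 ≤ distortionIntegral a t (t + δ) := by
      simpa using ha.half_sub_le_distortionIntegral hle
    calc energyMajorant a t₁ T (t + δ)
        ≤ Real.exp (-2 * distortionIntegral a t₁ (t + δ)) := ha.energyMajorant_le_exp htT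
      _ ≤ Real.exp (-2 * distortionIntegral a t₁ t + -1 / 4) := Real.exp_le_exp.2 (by linarith)
      _ ≤ _ := le_mul_of_one_le_left (Real.exp_pos _).le hone

theorem one_le_mul_exp_neg_distortionIntegral (ha : OpeningMajorant a) (hst : s ≤ t)
    (hts : t - s ≤ a t / 2) : 1 ≤ 8 / Real.pi * Real.exp (-distortionIntegral a s t) := by
  have hdist : distortionIntegral a s t ≤ 7 / 8 := by
    have hexp := exp_le_one_add_mul (half_pos (ha.pos t)).le (by linarith [ha.le_two t])
    refine (ha.distortionIntegral_le_exp_sub_one_div hst).trans ((div_le_iff₀ (ha.pos t)).2 ?_)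
    nlinarith [Real.exp_le_exp.2 hts, Real.exp_one_lt_d9, ha.pos t]
  calc 1 = Real.exp (7 / 8) * Real.exp (-(7 / 8)) := by rw [← Real.exp_add]; simp
    _ ≤ 8 / Real.pi * Real.exp (-distortionIntegral a s t) := by
        gcongr
        exact exp_seven_eighths_le

end OpeningMajorant

/-- A function with values in `[0, 1]`, subharmonic on the half plane `t₀ < re p`, which vanishes
off a strip-like region ending at the abscissa `b`. The vertical slices of the region lie in
`[c, d]` and have length at most `π * a t`. -/
structure StripSubsolution (w : ℂ → ℝ) (a : ℝ → ℝ) (t₀ b c d : ℝ) : Prop where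
  subharmonicAt : ∀ p : ℂ, t₀ < p.re → SubharmonicAt w p
  nonneg : ∀ p, 0 ≤ w p
  le_one : ∀ p, w p ≤ 1
  exists_slice : ∀ t, t₀ < t → ∃ P Q, P ≤ Q ∧ c ≤ P ∧ Q ≤ d ∧ Q - P ≤ Real.pi * a t ∧
    ∀ y : ℝ, y ∉ Ioo P Q → w (t + y * Complex.I) = 0
  eq_zero : ∀ p : ℂ, b ≤ p.re → w p = 0

namespace StripSubsolution

variable {w : ℂ → ℝ} {a : ℝ → ℝ} {t₀ t₁ b c d t T : ℝ} {z : ℂ}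

theorem integral_eq_sliceEnergy (hw : StripSubsolution w a t₀ b c d) (ht : t₀ < t) :
    ∫ y : ℝ, w (t + y * Complex.I) ^ 2 = sliceEnergy w c d t := by
  obtain ⟨P, Q, -, hcP, hQd, -, hzero⟩ := hw.exists_slice t ht
  exact (sliceEnergy_eq_integral hcP hQd hzero).symm

theorem integrable_sq (hw : StripSubsolution w a t₀ b c d) (ht : t₀ < t) :
    Integrable fun y : ℝ => w (t + y * Complex.I) ^ 2 := by
  obtain ⟨P, Q, -, -, -, -, hzero⟩ := hw.exists_slice t ht
  have hcont : Continuous fun y : ℝ => w (t + y * Complex.I) :=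
    continuous_vertical (S := Ioi t₀) (fun p hp => (hw.subharmonicAt p hp).1.continuousAt) ht
  refine (hcont.pow 2).integrable_of_hasCompactSupport
    (HasCompactSupport.intro (isCompact_Icc (a := P) (b := Q)) fun y hy => ?_)
  simp [hzero y fun h => hy (Ioo_subset_Icc_self h)]

theorem sliceEnergy_le_energyMajorant (hw : StripSubsolution w a t₀ b c d)
    (ha : OpeningMajorant a) (ht₁ : t₀ < t₁) (hT : b ≤ T) (ht : t ∈ Icc t₁ T) :
    sliceEnergy w c d t ≤ 2 * Real.pi * energyMajorant a t₁ T t := by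
  have hC2 : ∀ p : ℂ, p.re ∈ Ioi t₀ → ContDiffAt ℝ 2 w p := fun p hp => (hw.subharmonicAt p hp).1
  have hzero : ∀ s : ℝ, t₀ < s → w (s + c * Complex.I) = 0 ∧ w (s + d * Complex.I) = 0 := by
    intro s hs
    obtain ⟨P, Q, -, hcP, hQd, -, hzero⟩ := hw.exists_slice s hs
    exact ⟨hzero c fun h => h.1.not_ge hcP, hzero d fun h => h.2.not_ge hQd⟩
  refine ha.le_two_pi_mul_energyMajorant
    (fun s hs => hasDerivAt_sliceEnergy isOpen_Ioi (fun p hp => (hC2 p hp).of_le one_le_two)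
      (ht₁.trans_le hs.1))
    (fun s hs => hasDerivAt_deriv_sliceEnergy isOpen_Ioi hC2 (ht₁.trans_le hs.1)
      (hzero s (ht₁.trans_le hs.1)).1 (hzero s (ht₁.trans_le hs.1)).2)
    (fun s hs => ?_) ?_ ?_ ht
  · obtain ⟨P, Q, hPQ, hcP, hQd, hwidth, hvanish⟩ := hw.exists_slice s (ht₁.trans_le hs.1)
    have hineq := sliceEnergy_differential_inequality (S := Ioi t₀) (ht₁.trans_le hs.1)
      hw.subharmonicAt hw.nonneg hPQ hcP hQd (one_div_pos.2 (ha.pos s))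
      (by rwa [one_div_mul_eq_div, div_le_iff₀ (ha.pos s)]) hvanish
    rwa [mul_one_div] at hineq
  · obtain ⟨P, Q, hPQ, hcP, hQd, hwidth, hvanish⟩ := hw.exists_slice t₁ ht₁
    exact (sliceEnergy_le hw.nonneg hw.le_one hPQ hcP hQd hvanish).trans hwidth
  · have hvanish (y : ℝ) : w (T + y * Complex.I) = 0 := hw.eq_zero _ (by simpa using hT)
    simp [sliceEnergy, hvanish]

theorem sqrt_mul_integral_sq_le (hw : StripSubsolution w a t₀ b c d) (ha : OpeningMajorant a)
    (ht₁ : t₀ < t₁) (hT : b ≤ T) {s k : ℝ} (hs : s ∈ Icc t₁ T)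
    (hE : energyMajorant a t₁ T s ≤
      a t * Real.exp (-2 * distortionIntegral a t₁ t) * Real.exp (2 * k)) :
    √(Real.pi / (a t / 2) * ∫ y : ℝ, w (s + y * Complex.I) ^ 2) ≤
      2 * Real.pi * (Real.exp k * Real.exp (-distortionIntegral a t₁ t)) := by
  have hat := ha.pos t
  refine Real.sqrt_le_iff.2 ⟨by positivity, ?_⟩
  rw [hw.integral_eq_sliceEnergy (ht₁.trans_le hs.1)]
  calc Real.pi / (a t / 2) * sliceEnergy w c d s
      ≤ Real.pi / (a t / 2) * (2 * Real.pi *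
        (a t * Real.exp (-2 * distortionIntegral a t₁ t) * Real.exp (2 * k))) := by
        gcongr
        exact (hw.sliceEnergy_le_energyMajorant ha ht₁ hT hs).trans (by gcongr)
    _ = _ := by
        rw [neg_mul, ← mul_neg, two_mul k, two_mul (-distortionIntegral a t₁ t), Real.exp_add,
          Real.exp_add]
        field_simp

theorem le_add_mul_exp_neg_distortionIntegral (hw : StripSubsolution w a t₀ b c d)
    (ha : OpeningMajorant a) (ht₁ : t₀ < t₁) (hz : t₁ ≤ z.re - a z.re / 2) :
    w z ≤ (Real.exp (1 / 2) + Real.exp (-1 / 8)) *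
      Real.exp (-distortionIntegral a t₁ z.re) := by
  set t := z.re
  have hδ : 0 < a t / 2 := half_pos (ha.pos t)
  obtain ⟨T, hT⟩ := ((eventually_ge_atTop b).and ((eventually_ge_atTop (t + a t / 2)).and
    (eventually_ge_atTop (t + a t / 2 - Real.log (a t))))).exists
  obtain ⟨hbT, htT, hlogT⟩ := hT
  have hright := hw.sqrt_mul_integral_sq_le ha ht₁ hbT (t := t) (s := t + a t / 2) (k := -1 / 8)
    ⟨by linarith, htT⟩ (by
      rw [show (2 : ℝ) * (-1 / 8) = -1 / 4 by norm_num]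
      exact ha.energyMajorant_add_half_le htT hlogT)
  have hleft := hw.sqrt_mul_integral_sq_le ha ht₁ hbT (t := t) (s := t - a t / 2) (k := 1 / 2)
    ⟨hz, by linarith⟩ (by
      rw [mul_one_div_cancel two_ne_zero]
      exact ha.energyMajorant_sub_half_le (by linarith) (by linarith))
  have hslices := two_pi_mul_le_sqrt_add_sqrt (z := z) hδ hw.nonneg hw.le_one
    (fun p hp => hw.subharmonicAt p (by linarith [(abs_le.1 hp).1]))
    (hw.integrable_sq (by linarith)) (hw.integrable_sq (by linarith))
  refine le_of_mul_le_mul_left ?_ Real.two_pi_pos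
  linarith

/-- **Ahlfors distortion estimate** -/
theorem le_eight_div_pi_mul_exp (hw : StripSubsolution w a t₀ b c d)
    (ha : OpeningMajorant a) (ht₁ : t₀ < t₁) (hz : t₁ ≤ z.re) :
    w z ≤ 8 / Real.pi * Real.exp (-distortionIntegral a t₁ z.re) := by
  rcases le_total (z.re - t₁) (a z.re / 2) with hnear | hfar
  · exact (hw.le_one z).trans (ha.one_le_mul_exp_neg_distortionIntegral hz hnear)
  · refine (hw.le_add_mul_exp_neg_distortionIntegral ha ht₁ (by linarith)).trans ?_
    gcongr
    exact exp_half_add_exp_neg_eighth_le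

end StripSubsolution

section HolderCorner

variable {α γ C r s t ρ : ℝ}

/-- The opening of a Hölder-`C¹` corner of angle `πα`, in units of `π` and in the variable
`t = log r`, capped at the opening `2` of a slit plane. -/
noncomputable def cornerOpening (α γ C t : ℝ) : ℝ := min (α * (1 + C * Real.exp (γ * t))) 2

theorem openingMajorant_cornerOpening (hα : 0 < α) (hγ0 : 0 ≤ γ) (hγ1 : γ ≤ 1) (hC : 0 ≤ C) :
    OpeningMajorant (cornerOpening α γ C) where
  continuous := by unfold cornerOpening; fun_prop
  pos t := lt_min (by positivity) two_pos
  le_two t := min_le_right _ _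
  monotone := fun s t hst => min_le_min_right _ (by gcongr)
  le_mul_exp := fun s t hst => by
    have hone : 1 ≤ Real.exp (t - s) := Real.one_le_exp (sub_nonneg.2 hst)
    have hexp : Real.exp (γ * t) ≤ Real.exp (γ * s) * Real.exp (t - s) := by
      rw [← Real.exp_add]
      exact Real.exp_le_exp.2 (by nlinarith)
    rw [cornerOpening, cornerOpening, min_mul_of_nonneg _ _ (Real.exp_nonneg _)]
    refine min_le_min ?_ (by linarith)
    calc α * (1 + C * Real.exp (γ * t))
        ≤ α * (1 * Real.exp (t - s) + C * (Real.exp (γ * s) * Real.exp (t - s))) := by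
          rw [one_mul]
          gcongr
      _ = α * (1 + C * Real.exp (γ * s)) * Real.exp (t - s) := by ring

theorem hasDerivAt_div_sub_log_div (hα : 0 < α) (hγ : 0 < γ) (hC : 0 ≤ C) (x : ℝ) :
    HasDerivAt (fun t => t / α - Real.log (1 + C * Real.exp (γ * t)) / (α * γ))
      (1 / (α * (1 + C * Real.exp (γ * x)))) x := by
  have hpos : 0 < 1 + C * Real.exp (γ * x) := by positivity
  have hlog := (((((hasDerivAt_id x).const_mul γ).exp.const_mul C).const_add 1).log hpos.ne')
  refine (((hasDerivAt_id x).div_const α).sub (hlog.div_const (α * γ))).congr_deriv ?_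
  simp only [id_eq]
  field_simp
  ring

theorem sub_log_div_le_distortionIntegral_cornerOpening (hα : 0 < α) (hγ0 : 0 < γ) (hγ1 : γ ≤ 1)
    (hC : 0 ≤ C) (hst : s ≤ t) :
    (t - s) / α - Real.log (1 + C * Real.exp (γ * t)) / (α * γ) ≤
      distortionIntegral (cornerOpening α γ C) s t := by
  have ha := openingMajorant_cornerOpening hα hγ0.le hγ1 hC
  have hle := sub_le_sub_of_hasDerivAt_le hst
    (fun x _ => hasDerivAt_div_sub_log_div hα hγ0 hC x)
    (fun x _ => ha.hasDerivAt_distortionIntegral s x)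
    (fun x _ => one_div_le_one_div_of_le (ha.pos x) (min_le_left _ _))
  have hlog : 0 ≤ Real.log (1 + C * Real.exp (γ * s)) / (α * γ) :=
    div_nonneg (Real.log_nonneg (le_add_of_nonneg_right (by positivity))) (by positivity)
  rw [distortionIntegral_self] at hle
  rw [sub_div]
  linarith

theorem exp_neg_distortionIntegral_cornerOpening_le (hα : 0 < α) (hγ0 : 0 < γ) (hγ1 : γ ≤ 1)
    (hC : 0 ≤ C) (hr : 0 < r) (hrρ : r ≤ ρ) :
    Real.exp (-distortionIntegral (cornerOpening α γ C) (Real.log r) (Real.log ρ)) ≤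
      (r / ρ) ^ (1 / α) * (1 + C * ρ ^ γ) ^ (1 / (α * γ)) := by
  have hρ : 0 < ρ := hr.trans_le hrρ
  have hle := sub_log_div_le_distortionIntegral_cornerOpening hα hγ0 hγ1 hC
    (Real.log_le_log hr hrρ)
  have hpow : Real.exp (γ * Real.log ρ) = ρ ^ γ := by rw [Real.rpow_def_of_pos hρ, mul_comm]
  rw [Real.rpow_def_of_pos (div_pos hr hρ), Real.rpow_def_of_pos (by positivity), ← Real.exp_add,
    Real.log_div hr.ne' hρ.ne']
  refine Real.exp_le_exp.2 ((neg_le_neg hle).trans_eq ?_)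
  rw [hpow]
  ring

end HolderCorner

section SoftPosPart

variable {ε x : ℝ}

/-- A `C²` convex substitute for the positive part, differing from it by at most `2ε`: its slope
rises from `0` at `ε` to `1` at `2ε`. -/
noncomputable def softPosPart (ε x : ℝ) : ℝ := ∫ s in 0..x, Real.smoothTransition (s / ε - 1)

theorem contDiff_smoothTransition_div_sub_one (ε : ℝ) :
    ContDiff ℝ 1 fun s => Real.smoothTransition (s / ε - 1) :=
  Real.smoothTransition.contDiff.comp ((contDiff_id.div_const ε).sub contDiff_const)

theorem hasDerivAt_softPosPart (ε x : ℝ) :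
    HasDerivAt (softPosPart ε) (Real.smoothTransition (x / ε - 1)) x := by
  have hcont := (contDiff_smoothTransition_div_sub_one ε).continuous
  exact intervalIntegral.integral_hasDerivAt_right (hcont.intervalIntegrable _ _)
    (hcont.stronglyMeasurableAtFilter _ _) hcont.continuousAt

theorem deriv_softPosPart (ε : ℝ) :
    deriv (softPosPart ε) = fun s => Real.smoothTransition (s / ε - 1) :=
  funext fun x => (hasDerivAt_softPosPart ε x).deriv

theorem contDiff_softPosPart (ε : ℝ) : ContDiff ℝ 2 (softPosPart ε) := by
  rw [← one_add_one_eq_two, contDiff_succ_iff_deriv, deriv_softPosPart]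
  exact ⟨fun x => (hasDerivAt_softPosPart ε x).differentiableAt, by simp,
    contDiff_smoothTransition_div_sub_one ε⟩

theorem deriv_deriv_softPosPart_nonneg (hε : 0 ≤ ε) (x : ℝ) :
    0 ≤ deriv (deriv (softPosPart ε)) x := by
  rw [deriv_softPosPart]
  refine Monotone.deriv_nonneg fun s t hst => Real.smoothTransition.monotone ?_
  gcongr

theorem softPosPart_eq_zero (hε : 0 < ε) (hx : x ≤ ε) : softPosPart ε x = 0 := by
  refine (intervalIntegral.integral_congr (g := fun _ => 0) fun s hs => ?_).trans (by simp)
  have hs' : s ≤ ε := hs.2.trans (max_le hε.le hx)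
  exact Real.smoothTransition.zero_of_nonpos (sub_nonpos.2 ((div_le_one hε).2 hs'))

theorem softPosPart_nonneg (hε : 0 < ε) (x : ℝ) : 0 ≤ softPosPart ε x := by
  rcases le_total x 0 with hx | hx
  · exact (softPosPart_eq_zero hε (hx.trans hε.le)).ge
  · exact intervalIntegral.integral_nonneg hx fun s _ => Real.smoothTransition.nonneg _

theorem softPosPart_le_one (hε : 0 < ε) (hx : x ≤ 1) : softPosPart ε x ≤ 1 := by
  rcases le_total x 0 with hx0 | hx0
  · exact (softPosPart_eq_zero hε (hx0.trans hε.le)).trans_le zero_le_one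
  · have hle := sub_le_sub_of_hasDerivAt_le hx0 (fun s _ => hasDerivAt_softPosPart ε s)
      (fun s _ => hasDerivAt_id s) (fun s _ => Real.smoothTransition.le_one _)
    rw [softPosPart_eq_zero hε hε.le] at hle
    simp only [id_eq] at hle
    linarith

theorem sub_two_mul_le_softPosPart (hε : 0 < ε) (x : ℝ) : x - 2 * ε ≤ softPosPart ε x := by
  rcases le_total x (2 * ε) with hx | hx
  · linarith [softPosPart_nonneg hε x]
  · have hle := sub_le_sub_of_hasDerivAt_le hx (fun s _ => hasDerivAt_id s)
      (fun s _ => hasDerivAt_softPosPart ε s) (fun s hs => by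
        rw [Real.smoothTransition.one_of_one_le]
        linarith [(le_div_iff₀ hε).2 hs.1])
    simp only [id_eq] at hle
    linarith [softPosPart_nonneg hε (2 * ε)]

end SoftPosPart

theorem mapsTo_frontier_image {X Y : Type*} [TopologicalSpace X] [T2Space X] [TopologicalSpace Y]
    {f : X → Y} {D : Set X} (hf : Continuous f) (hfo : IsOpenMap f) (hD : IsOpen D)
    (hinj : InjOn f D) : MapsTo f (frontier D) (frontier (f '' D)) := by
  intro p hp
  rw [hD.frontier_eq] at hp
  rw [(hfo D hD).frontier_eq]
  refine ⟨image_closure_subset_closure_image hf ⟨p, hp.1, rfl⟩, ?_⟩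
  rintro ⟨q, hqD, hqp⟩
  obtain ⟨U, V, hU, hV, hpU, hqV, hUV⟩ := t2_separation fun h : p = q => hp.2 (h ▸ hqD)
  have hnhds : f ⁻¹' (f '' (V ∩ D)) ∈ 𝓝 p :=
    hf.continuousAt ((hfo _ (hV.inter hD)).mem_nhds ⟨q, ⟨hqV, hqD⟩, hqp⟩)
  obtain ⟨x, ⟨hxU, y, ⟨hyV, hyD⟩, hyx⟩, hxD⟩ :=
    mem_closure_iff_nhds.1 hp.1 _ (inter_mem (hU.mem_nhds hpU) hnhds)
  exact hUV.le_bot ⟨hxU, hinj hyD hxD hyx ▸ hyV⟩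

section LogarithmicCoordinates

variable {ρ₀ : ℝ} {φp φm : ℝ → ℝ}

/-- The preimage of a polar domain in the variable `log z`. The exponential is injective on it when
the opening is at most `2π`. -/
def logDomain (ρ₀ : ℝ) (φp φm : ℝ → ℝ) : Set ℂ :=
  {p | Real.exp p.re < ρ₀ ∧ φp (Real.exp p.re) < p.im ∧ p.im < φm (Real.exp p.re)}

theorem image_exp_logDomain (ρ₀ : ℝ) (φp φm : ℝ → ℝ) :
    Complex.exp '' logDomain ρ₀ φp φm = polarDomain ρ₀ φp φm := by
  ext z
  constructor
  · rintro ⟨p, ⟨hre, hp, hm⟩, rfl⟩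
    refine ⟨Real.exp p.re, p.im, Real.exp_pos _, hre, hp, hm, ?_⟩
    rw [Complex.ofReal_exp, ← Complex.exp_add, Complex.re_add_im]
  · rintro ⟨r, θ, hr, hre, hp, hm, rfl⟩
    refine ⟨Real.log r + θ * Complex.I, ?_, ?_⟩
    · simpa [logDomain, Real.exp_log hr] using ⟨hre, hp, hm⟩
    · rw [Complex.exp_add, ← Complex.ofReal_exp, Real.exp_log hr]

theorem isOpen_logDomain (hφp : ContinuousOn φp (Ioo 0 ρ₀)) (hφm : ContinuousOn φm (Ioo 0 ρ₀)) :
    IsOpen (logDomain ρ₀ φp φm) := by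
  have hexp : Continuous fun p : ℂ => Real.exp p.re :=
    Real.continuous_exp.comp Complex.continuous_re
  have hopen : IsOpen {p : ℂ | Real.exp p.re < ρ₀} := isOpen_lt hexp continuous_const
  have hmaps : MapsTo (fun p : ℂ => Real.exp p.re) {p | Real.exp p.re < ρ₀} (Ioo 0 ρ₀) :=
    fun p hp => ⟨Real.exp_pos _, hp⟩
  have hlower := (Complex.continuous_im.continuousOn.sub (hφp.comp hexp.continuousOn hmaps))
    |>.isOpen_inter_preimage hopen isOpen_Ioi (t := Ioi 0)
  have hupper := ((hφm.comp hexp.continuousOn hmaps).sub Complex.continuous_im.continuousOn)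
    |>.isOpen_inter_preimage hopen isOpen_Ioi (t := Ioi 0)
  convert hlower.inter hupper using 1
  ext p
  simp only [logDomain, mem_ofPred_eq, mem_inter_iff, mem_preimage, Pi.sub_apply,
    Function.comp_apply, mem_Ioi, sub_pos]
  tauto

theorem injOn_exp_logDomain (hΘ : ∀ r ∈ Ioo 0 ρ₀, φm r - φp r ≤ 2 * Real.pi) :
    InjOn Complex.exp (logDomain ρ₀ φp φm) := by
  rintro p ⟨-, hp₁, hp₂⟩ q ⟨hq, hq₁, hq₂⟩ hpq
  obtain ⟨n, hn⟩ := Complex.exp_eq_exp_iff_exists_int.1 hpq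
  have hre : p.re = q.re := by simp [hn]
  have him : p.im = q.im + n * (2 * Real.pi) := by simp [hn]
  have hwidth := hΘ _ ⟨Real.exp_pos _, hq⟩
  rw [hre] at hp₁ hp₂
  have hlt : (n : ℝ) < 1 := (mul_lt_iff_lt_one_left Real.two_pi_pos).1 (by linarith)
  have hgt : (-1 : ℝ) < n := neg_lt.1 ((mul_lt_iff_lt_one_left Real.two_pi_pos).1 (by linarith))
  obtain rfl : n = 0 := by
    have : n < 1 := by exact_mod_cast hlt
    have : -1 < n := by exact_mod_cast hgt
    omega
  simpa using hn

theorem HarmonicOnSet.harmonicAt {u : ℂ → ℝ} {U : Set ℂ} {z : ℂ} (hu : HarmonicOnSet u U)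
    (hU : IsOpen U) (hz : z ∈ U) : HarmonicAt u z := by
  refine ⟨hu.1.contDiffAt (hU.mem_nhds hz), ?_⟩
  filter_upwards [hU.mem_nhds hz] with x hx
  rw [laplacian_eq_iteratedFDeriv_complexPlane]
  exact hu.2 x hx

end LogarithmicCoordinates

section PolarDomain

variable {Ω : Set ℂ} {ρ₀ r₀ ε t c d : ℝ} {φp φm a : ℝ → ℝ} {u : ℂ → ℝ} {p z : ℂ}

/-- `u` is dominated by the harmonic measure of `∂Ω ∩ B̄_{r₀}(0)` in `Ω`, expressed without harmonic
measure: `u` is harmonic, at most `1`, and has nonpositive boundary values off the ball. -/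
structure HarmonicMeasureMinorant (u : ℂ → ℝ) (Ω : Set ℂ) (r₀ : ℝ) : Prop where
  harmonicOnSet : HarmonicOnSet u Ω
  le_one : ∀ z ∈ Ω, u z ≤ 1
  limsup_nonpos : ∀ ζ ∈ frontier Ω, r₀ < ‖ζ‖ → limsup u (𝓝[Ω] ζ) ≤ 0

theorem HarmonicMeasureMinorant.eventually_lt (hu : HarmonicMeasureMinorant u Ω r₀) (hε : 0 < ε)
    (hz : z ∈ frontier Ω) (hzr : r₀ < ‖z‖) : ∀ᶠ x in 𝓝[Ω] z, u x < ε :=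
  eventually_lt_of_limsup_lt ((hu.limsup_nonpos z hz hzr).trans_lt hε)
    (isBoundedUnder_of_eventually_le (a := 1) (eventually_mem_nhdsWithin.mono hu.le_one))

theorem subharmonicAt_indicator_softPosPart
    (hφp : ContinuousOn φp (Ioo 0 ρ₀)) (hφm : ContinuousOn φm (Ioo 0 ρ₀))
    (hΘ : ∀ r ∈ Ioo 0 ρ₀, φm r - φp r ≤ 2 * Real.pi)
    (hu : HarmonicMeasureMinorant u (polarDomain ρ₀ φp φm) r₀)
    (hε : 0 < ε) (hpr : r₀ < ‖Complex.exp p‖) :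
    SubharmonicAt
      ((logDomain ρ₀ φp φm).indicator fun p => softPosPart ε (u (Complex.exp p))) p := by
  have hopen := isOpen_logDomain hφp hφm
  rw [← image_exp_logDomain] at hu
  refine subharmonicAt_indicator hopen (fun hp => ?_) fun hp => ?_
  · exact (SubharmonicAt.convex_comp_harmonicAt (contDiff_softPosPart ε)
      (deriv_deriv_softPosPart_nonneg hε.le) (hu.harmonicOnSet.harmonicAt
        (Complex.isOpenMap_exp _ hopen) (mem_image_of_mem _ hp))).comp_analyticAt analyticAt_cexp
  · have hlt := hu.eventually_lt hε (mapsTo_frontier_image Complex.continuous_exp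
      Complex.isOpenMap_exp hopen (injOn_exp_logDomain hΘ) hp) hpr
    have htendsto := Complex.continuous_exp.continuousWithinAt.tendsto_nhdsWithin
      (x := p) (mapsTo_image _ (logDomain ρ₀ φp φm))
    exact (htendsto.eventually hlt).mono fun q hq => softPosPart_eq_zero hε hq.le

theorem exists_slice_logDomain (ha : OpeningMajorant a)
    (hΘ : ∀ r ∈ Ioo 0 ρ₀, φm r - φp r ≤ Real.pi * a (Real.log r)) (hcd : c ≤ d)
    (hbound : Real.exp t < ρ₀ → φp (Real.exp t) ∈ Icc c d ∧ φm (Real.exp t) ∈ Icc c d) :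
    ∃ P Q, P ≤ Q ∧ c ≤ P ∧ Q ≤ d ∧ Q - P ≤ Real.pi * a t ∧
      ∀ y : ℝ, y ∉ Ioo P Q → (t + y * Complex.I : ℂ) ∉ logDomain ρ₀ φp φm := by
  have hnonneg : 0 ≤ Real.pi * a t := mul_nonneg Real.pi_pos.le (ha.pos t).le
  rcases lt_or_ge (Real.exp t) ρ₀ with ht | ht
  · obtain ⟨hp, hm⟩ := hbound ht
    refine ⟨φp (Real.exp t), max (φp (Real.exp t)) (φm (Real.exp t)), le_max_left _ _, hp.1,
      max_le hp.2 hm.2, ?_, fun y hy hmem => hy ?_⟩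
    · have hwidth := hΘ _ ⟨Real.exp_pos t, ht⟩
      rw [Real.log_exp] at hwidth
      exact sub_le_iff_le_add.2 (max_le (by linarith) (by linarith))
    · have him : φp (Real.exp t) < y ∧ y < φm (Real.exp t) := by simpa using hmem.2
      exact ⟨him.1, lt_max_of_lt_right him.2⟩
  · exact ⟨c, c, le_rfl, le_rfl, hcd, by rwa [sub_self],
      fun y _ hmem => ht.not_gt (by simpa using hmem.1)⟩

theorem exists_forall_Icc_mem_Icc {φ₁ φ₂ : ℝ → ℝ} {x y : ℝ} (h₁ : ContinuousOn φ₁ (Icc x y))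
    (h₂ : ContinuousOn φ₂ (Icc x y)) :
    ∃ c d, c ≤ d ∧ ∀ r ∈ Icc x y, φ₁ r ∈ Icc c d ∧ φ₂ r ∈ Icc c d := by
  obtain ⟨K, hK, hbound⟩ := ((isCompact_Icc.image_of_continuousOn h₁).union
    (isCompact_Icc.image_of_continuousOn h₂)).isBounded.exists_pos_norm_le
  exact ⟨-K, K, by linarith, fun r hr =>
    ⟨abs_le.1 (hbound _ (.inl (mem_image_of_mem _ hr))),
      abs_le.1 (hbound _ (.inr (mem_image_of_mem _ hr)))⟩⟩

theorem HarmonicMeasureMinorant.exists_stripSubsolution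
    (hu : HarmonicMeasureMinorant u (polarDomain ρ₀ φp φm) r₀) (ha : OpeningMajorant a)
    (hr₀ : 0 < r₀) (hφp : ContinuousOn φp (Ioc 0 ρ₀)) (hφm : ContinuousOn φm (Ioc 0 ρ₀))
    (hΘ : ∀ r ∈ Ioo 0 ρ₀, φm r - φp r ≤ Real.pi * a (Real.log r)) (hε : 0 < ε) :
    ∃ c d, StripSubsolution
      ((logDomain ρ₀ φp φm).indicator fun p => softPosPart ε (u (Complex.exp p))) a
      (Real.log r₀) (Real.log ρ₀) c d := by
  have hsub : Icc r₀ ρ₀ ⊆ Ioc 0 ρ₀ := fun r hr => ⟨hr₀.trans_le hr.1, hr.2⟩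
  obtain ⟨c, d, hcd, hbound⟩ := exists_forall_Icc_mem_Icc (hφp.mono hsub) (hφm.mono hsub)
  have hΘ2 : ∀ r ∈ Ioo 0 ρ₀, φm r - φp r ≤ 2 * Real.pi := fun r hr =>
    (hΘ r hr).trans (by nlinarith [Real.pi_pos, ha.le_two (Real.log r)])
  refine ⟨c, d, fun p hp => ?_, fun p => indicator_nonneg (fun _ _ => softPosPart_nonneg hε _) p,
    fun p => ?_, fun t ht => ?_, fun p hp => indicator_of_notMem (fun hmem => ?_) _⟩
  · exact subharmonicAt_indicator_softPosPart (hφp.mono Ioo_subset_Ioc_self)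
      (hφm.mono Ioo_subset_Ioc_self) hΘ2 hu hε
      (by rwa [Complex.norm_exp, ← Real.log_lt_iff_lt_exp hr₀])
  · refine indicator_le' (fun q hq => softPosPart_le_one hε (hu.le_one _ ?_))
      (fun _ _ => zero_le_one) p
    exact image_exp_logDomain ρ₀ φp φm ▸ mem_image_of_mem _ hq
  · obtain ⟨P, Q, hPQ, hcP, hQd, hwidth, hvanish⟩ := exists_slice_logDomain ha hΘ hcd
      fun htρ => hbound _ ⟨((Real.log_lt_iff_lt_exp hr₀).1 ht).le, htρ.le⟩
    exact ⟨P, Q, hPQ, hcP, hQd, hwidth, fun y hy => indicator_of_notMem (hvanish y hy) _⟩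
  · exact ((Real.le_exp_log ρ₀).trans (Real.exp_le_exp.2 hp)).not_gt hmem.1

theorem HarmonicMeasureMinorant.le_mul_exp_neg_distortionIntegral
    (hu : HarmonicMeasureMinorant u (polarDomain ρ₀ φp φm) r₀) (ha : OpeningMajorant a)
    (hr₀ : 0 < r₀) (hφp : ContinuousOn φp (Ioc 0 ρ₀)) (hφm : ContinuousOn φm (Ioc 0 ρ₀))
    (hΘ : ∀ r ∈ Ioo 0 ρ₀, φm r - φp r ≤ Real.pi * a (Real.log r))
    (hz : z ∈ polarDomain ρ₀ φp φm) (hzr : r₀ < ‖z‖) :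
    u z ≤ 8 / Real.pi * Real.exp (-distortionIntegral a (Real.log r₀) (Real.log ‖z‖)) := by
  obtain ⟨p, hp, rfl⟩ := image_exp_logDomain ρ₀ φp φm ▸ hz
  rw [Complex.norm_exp, Real.log_exp]
  have hlt : Real.log r₀ < p.re := by
    rwa [Complex.norm_exp, ← Real.log_lt_iff_lt_exp hr₀] at hzr
  have hle : ∀ t₁ ∈ Ioc (Real.log r₀) p.re,
      u (Complex.exp p) ≤ 8 / Real.pi * Real.exp (-distortionIntegral a t₁ p.re) := by
    refine fun t₁ ht₁ => le_of_forall_pos_le_add fun δ hδ => ?_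
    obtain ⟨c, d, hw⟩ := hu.exists_stripSubsolution ha hr₀ hφp hφm hΘ (half_pos hδ)
    have hbound := hw.le_eight_div_pi_mul_exp ha ht₁.1 ht₁.2
    rw [indicator_of_mem hp] at hbound
    linarith [sub_two_mul_le_softPosPart (half_pos hδ) (u (Complex.exp p))]
  have hcont : Continuous fun t₁ => 8 / Real.pi * Real.exp (-distortionIntegral a t₁ p.re) :=
    (ha.continuous_distortionIntegral_left p.re).neg.rexp.const_mul _
  refine ge_of_tendsto (x := 𝓝[>] Real.log r₀) ((hcont.tendsto _).mono_left nhdsWithin_le_nhds) ?_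
  filter_upwards [Ioc_mem_nhdsGT hlt] using hle

end PolarDomain

theorem stmt_6_general {ρ₀ r₀ α γ C₁ : ℝ} (hr₀ : 0 < r₀) (hα : 0 < α) (hγ0 : 0 < γ) (hγ1 : γ ≤ 1)
    (hC₁ : 0 ≤ C₁) {φp φm : ℝ → ℝ}
    (hφp : ContinuousOn φp (Ioc 0 ρ₀)) (hφm : ContinuousOn φm (Ioc 0 ρ₀))
    (hΘle : ∀ r ∈ Ioo 0 ρ₀, φm r - φp r ≤ 2 * Real.pi)
    (hΘα : ∀ r ∈ Ioo 0 ρ₀, φm r - φp r ≤ Real.pi * α * (1 + C₁ * r ^ γ))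
    {u : ℂ → ℝ} (hu : HarmonicMeasureMinorant u (polarDomain ρ₀ φp φm) r₀) {z : ℂ}
    (hz : z ∈ polarDomain ρ₀ φp φm) (hzr : r₀ < ‖z‖) :
    u z ≤ (8 / Real.pi) * (r₀ / ‖z‖) ^ (1 / α) * (1 + C₁ * ‖z‖ ^ γ) ^ (1 / (α * γ)) := by
  have ha := openingMajorant_cornerOpening hα hγ0.le hγ1 hC₁
  have hΘ : ∀ r ∈ Ioo 0 ρ₀, φm r - φp r ≤ Real.pi * cornerOpening α γ C₁ (Real.log r) := by
    intro r hr
    rw [cornerOpening, mul_min_of_nonneg _ _ Real.pi_pos.le, mul_comm γ,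
      ← Real.rpow_def_of_pos hr.1, ← mul_assoc, mul_comm Real.pi 2]
    exact le_min (hΘα r hr) (hΘle r hr)
  refine (hu.le_mul_exp_neg_distortionIntegral ha hr₀ hφp hφm hΘ hz hzr).trans ?_
  rw [mul_assoc]
  gcongr
  exact exp_neg_distortionIntegral_cornerOpening_le hα hγ0 hγ1 hC₁ hr₀ hzr.le

/-- the quantitative harmonic-measure bound near a Hölder-C¹ corner of
opening `πα`: if in addition `Θ(r) ≤ πα(1 + C₁ r^γ)`, then any harmonic `u ≤ 1` on the
polar domain `Ω` whose boundary limsup is `≤ 0` on `∂Ω ∩ {|ζ| > r₀}` satisfies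
`u z ≤ (8/π)(r₀/|z|)^{1/α}(1 + C₁|z|^γ)^{1/(αγ)}` for `z ∈ Ω` with `|z| > r₀`. -/
theorem stmt_6 (ρ₀ r₀ α γ C₁ : ℝ) (hρ₀ : 0 < ρ₀) (hr₀ : 0 < r₀) (hr : r₀ < ρ₀)
    (hα0 : 0 < α) (hα2 : α ≤ 2) (hγ0 : 0 < γ) (hγ1 : γ ≤ 1) (hC₁ : 0 < C₁)
    (φp φm : ℝ → ℝ)
    (hφpc : ContinuousOn φp (Icc 0 ρ₀)) (hφmc : ContinuousOn φm (Icc 0 ρ₀))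
    (hΘpos : ∀ r ∈ Ioc (0:ℝ) ρ₀, 0 < φm r - φp r)
    (hΘle : ∀ r ∈ Ioc (0:ℝ) ρ₀, φm r - φp r ≤ 2 * Real.pi)
    (hΘα : ∀ r ∈ Ioc (0:ℝ) ρ₀, φm r - φp r ≤ Real.pi * α * (1 + C₁ * r ^ γ))
    (u : ℂ → ℝ) (hu : HarmonicOnSet u (polarDomain ρ₀ φp φm))
    (hub : ∀ z ∈ polarDomain ρ₀ φp φm, u z ≤ 1)
    (hbd : ∀ ζ ∈ frontier (polarDomain ρ₀ φp φm), r₀ < ‖ζ‖ →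
      Filter.limsup u (nhdsWithin ζ (polarDomain ρ₀ φp φm)) ≤ 0) :
    ∀ z ∈ polarDomain ρ₀ φp φm, r₀ < ‖z‖ →
      u z ≤ (8 / Real.pi) * (r₀ / ‖z‖) ^ (1 / α) * (1 + C₁ * ‖z‖ ^ γ) ^ (1 / (α * γ)) :=
  fun _ => stmt_6_general hr₀ hα0 hγ0 hγ1 hC₁.le (hφpc.mono Ioc_subset_Icc_self)
    (hφmc.mono Ioc_subset_Icc_self) (fun r hr => hΘle r (Ioo_subset_Ioc_self hr))
    (fun r hr => hΘα r (Ioo_subset_Ioc_self hr)) ⟨hu, hub, hbd⟩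
end

section
/- Let 0 < α ≤ 2, b > 0 with 2b < 1/α, and a > 0. For 0 < R < a^α define F(R) := 2 ∫_0^R (4 a^{2αb}/(απ r)) ∑_{j=0}^∞ [ (r/a^α)^{2b} − (r/a^α)^{(2j+1)/α} ] / ( ((2j+1)/α)² − (2b)² ) dr. Then the series converges for every r ∈ (0, a^α), the integral is finite, and there exist constants C > 0 and R̄ ∈ (0, a^α) such that |F(R) − (tan(παb)/(2b²)) R^{2b}| ≤ C R^{1/α} for all R ∈ (0, R̄). In particular, for every ε > 0 there exists R̄' > 0 such that F(R) ≥ (1 − ε)(tan(παb)/(2b²)) R^{2b} for all R ∈ (0, R̄'). -/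
open Set

open Filter Topology MeasureTheory Asymptotics

/-!
With `x = r / a ^ α` and `λⱼ = (2j+1)/α`, the integrand is, up to a constant, `h x / x` for
`h x = ∑ⱼ cⱼ (x ^ (2b) - x ^ λⱼ)`, `cⱼ = 1 / (λⱼ² - (2b)²)`. The partial fraction expansion of the
tangent gives `∑ⱼ cⱼ = α π tan (π α b) / (8 b)`, so integrating `(∑ⱼ cⱼ) x ^ (2b - 1)` produces the
main term. What remains, `∑ⱼ cⱼ x ^ λⱼ`, is at most `(∑ⱼ cⱼ) x ^ (1/α)` on `[0, 1]` because
`1/α` is the smallest of the exponents `λⱼ`.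
-/

section TangentSeries

lemma complex_tan_eq_cot_sub_two_mul_cot (z : ℂ) :
    Complex.tan z = Complex.cot z - 2 * Complex.cot (2 * z) := by
  rw [Complex.tan_eq_sin_div_cos, Complex.cot_eq_cos_div_sin, Complex.cot_eq_cos_div_sin,
    Complex.sin_two_mul, Complex.cos_two_mul']
  by_cases hs : Complex.sin z = 0
  · simp [hs]
  by_cases hc : Complex.cos z = 0
  · simp [hc]
  field_simp
  ring

lemma div_two_mem_integerComplement {z : ℂ} (hz : z ∈ Complex.integerComplement) :
    z / 2 ∈ Complex.integerComplement := by
  rintro ⟨n, hn⟩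
  exact hz ⟨2 * n, by push_cast; rw [hn]; ring⟩

lemma hasSum_cotTerm {z : ℂ} (hz : z ∈ Complex.integerComplement) :
    HasSum (cotTerm z) (Real.pi * Complex.cot (Real.pi * z) - 1 / z) :=
  cot_series_rep' hz ▸ (summable_cotTerm hz).hasSum

lemma cotTerm_two_mul_add_one (z : ℂ) (k : ℕ) :
    cotTerm z (2 * k + 1) = 1 / 2 * cotTerm (z / 2) k := by
  have hsub : z - ((2 * k + 1 : ℕ) + 1) = 2 * (z / 2 - (k + 1)) := by push_cast; ring
  have hadd : z + ((2 * k + 1 : ℕ) + 1) = 2 * (z / 2 + (k + 1)) := by push_cast; ring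
  rw [cotTerm, cotTerm, hsub, hadd]
  simp only [one_div, mul_inv, ← mul_add]

lemma cotTerm_two_mul {z : ℂ} (hz : z ∈ Complex.integerComplement) (k : ℕ) :
    cotTerm z (2 * k) = -(2 * z) * ((2 * k + 1) ^ 2 - z ^ 2 : ℂ)⁻¹ := by
  have hfactor : (z + ((2 * k : ℕ) + 1)) * (z - ((2 * k : ℕ) + 1)) =
      -((2 * k + 1) ^ 2 - z ^ 2) := by
    push_cast; ring
  rw [cotTerm_identity hz, hfactor, one_div, inv_neg]
  ring

/-- In the cotangent expansion at `z`, the terms with even shift are half the expansion at `z / 2`,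
so those with odd shift sum to a multiple of `cot w - 2 cot (2 w) = tan w`, where `w = π z / 2`. -/
theorem hasSum_inv_odd_sq_sub_sq {z : ℂ} (hz : z ∈ Complex.integerComplement) :
    HasSum (fun j : ℕ ↦ ((2 * j + 1) ^ 2 - z ^ 2 : ℂ)⁻¹)
      (Real.pi * Complex.tan (Real.pi * z / 2) / (4 * z)) := by
  have hz0 : z ≠ 0 := Complex.integerComplement.ne_zero hz
  have hall := hasSum_cotTerm hz
  have heven : HasSum (fun k ↦ cotTerm z (2 * k + 1))
      (1 / 2 * (Real.pi * Complex.cot (Real.pi * (z / 2)) - 1 / (z / 2))) := by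
    simpa only [cotTerm_two_mul_add_one] using
      (hasSum_cotTerm (div_two_mem_integerComplement hz)).mul_left (1 / 2)
  obtain ⟨s, hodd⟩ : Summable fun k ↦ cotTerm z (2 * k) :=
    hall.summable.comp_injective (i := fun k ↦ 2 * k) (mul_right_injective₀ two_ne_zero)
  have hsplit := (hodd.even_add_odd heven).unique hall
  have hseries := hodd.mul_left (-(2 * z))⁻¹
  simp only [cotTerm_two_mul hz,
    inv_mul_cancel_left₀ (neg_ne_zero.2 (mul_ne_zero two_ne_zero hz0))] at hseries
  have hvalue : Real.pi * Complex.tan (Real.pi * z / 2) / (4 * z) = (-(2 * z))⁻¹ * s := by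
    rw [eq_sub_of_add_eq hsplit, complex_tan_eq_cot_sub_two_mul_cot,
      show 2 * (Real.pi * z / 2) = Real.pi * z by ring, mul_div_assoc (Real.pi : ℂ) z 2]
    field_simp
    ring
  rwa [hvalue]

theorem real_hasSum_inv_odd_sq_sub_sq {x : ℝ} (hx : ∀ n : ℤ, (n : ℝ) ≠ x) :
    HasSum (fun j : ℕ ↦ ((2 * j + 1) ^ 2 - x ^ 2 : ℝ)⁻¹)
      (Real.pi * Real.tan (Real.pi * x / 2) / (4 * x)) := by
  have hz : (x : ℂ) ∈ Complex.integerComplement := fun ⟨n, hn⟩ ↦ hx n (mod_cast hn)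
  exact_mod_cast hasSum_inv_odd_sq_sub_sq hz

end TangentSeries

section MuntzSeries

variable {ι : Type*} {c l : ι → ℝ} {β μ x R : ℝ}

/-- The generalized power series `∑ⱼ cⱼ x ^ lⱼ` with real exponents, a Müntz series. It is used
with absolutely summable coefficients and `x ∈ (0, 1]`, where it converges as soon as the exponents
are bounded below. -/
noncomputable def muntzSeries (c l : ι → ℝ) (x : ℝ) : ℝ := ∑' j, c j * x ^ l j

lemma norm_mul_rpow_le (c : ℝ) {p q : ℝ} (hpq : p ≤ q) (hx : x ∈ Ioc 0 1) :
    ‖c * x ^ q‖ ≤ |c| * x ^ p := by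
  rw [norm_mul, Real.norm_eq_abs, Real.norm_of_nonneg (Real.rpow_nonneg hx.1.le q)]
  gcongr ?_ * ?_
  exact Real.rpow_le_rpow_of_exponent_ge hx.1 hx.2 hpq

lemma summable_mul_rpow (hc : Summable c) (hl : ∀ j, μ ≤ l j) (hx : x ∈ Ioc 0 1) :
    Summable fun j ↦ c j * x ^ l j :=
  .of_norm_bounded (hc.abs.mul_right (x ^ μ)) fun j ↦ norm_mul_rpow_le (c j) (hl j) hx

lemma norm_muntzSeries_le (hc : Summable c) (hl : ∀ j, μ ≤ l j) (hx : x ∈ Ioc 0 1) :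
    ‖muntzSeries c l x‖ ≤ (∑' j, |c j|) * x ^ μ :=
  tsum_of_norm_bounded (hc.abs.hasSum.mul_right (x ^ μ))
    fun j ↦ norm_mul_rpow_le (c j) (hl j) hx

lemma continuousOn_muntzSeries (hc : Summable c) (hl : ∀ j, 0 ≤ l j) :
    ContinuousOn (muntzSeries c l) (Ioc 0 1) := by
  refine continuousOn_tsum (fun j ↦ ?_) hc.abs fun j x hx ↦ ?_
  · exact (continuous_const.mul (Real.continuous_rpow_const (hl j))).continuousOn
  · simpa using norm_mul_rpow_le (c j) (hl j) hx

lemma norm_muntzSeries_div_le (hc : Summable c) (hl : ∀ j, μ ≤ l j) (hx : x ∈ Ioc 0 1) :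
    ‖muntzSeries c l x / x‖ ≤ (∑' j, |c j|) * x ^ (μ - 1) := by
  rw [norm_div, Real.norm_of_nonneg hx.1.le, Real.rpow_sub_one hx.1.ne', ← mul_div_assoc]
  exact div_le_div_of_nonneg_right (norm_muntzSeries_le hc hl hx) hx.1.le

lemma intervalIntegrable_muntzSeries_div (hc : Summable c) (hμ : 0 < μ) (hl : ∀ j, μ ≤ l j)
    (hR : R ∈ Icc 0 1) :
    IntervalIntegrable (fun x ↦ muntzSeries c l x / x) volume 0 R := by
  have hsub : uIoc 0 R ⊆ Ioc 0 1 := uIoc_of_le hR.1 ▸ Ioc_subset_Ioc_right hR.2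
  have hcont : ContinuousOn (fun x ↦ muntzSeries c l x / x) (uIoc 0 R) :=
    ((continuousOn_muntzSeries hc fun j ↦ hμ.le.trans (hl j)).div continuousOn_id
      fun _ hx ↦ hx.1.ne').mono hsub
  have hdom : IntervalIntegrable (fun x ↦ (∑' j, |c j|) * x ^ (μ - 1)) volume 0 R :=
    (intervalIntegral.intervalIntegrable_rpow' (by linarith)).const_mul _
  refine hdom.mono_fun' (hcont.aestronglyMeasurable measurableSet_uIoc) ?_
  filter_upwards [ae_restrict_mem measurableSet_uIoc] with x hx
  exact norm_muntzSeries_div_le hc hl (hsub hx)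

lemma integral_rpow_sub_one (hμ : 0 < μ) (R : ℝ) :
    ∫ x in (0 : ℝ)..R, x ^ (μ - 1) = R ^ μ / μ := by
  rw [integral_rpow (Or.inl (by linarith)), sub_add_cancel, Real.zero_rpow hμ.ne', sub_zero]

lemma norm_integral_muntzSeries_div_le (hc : Summable c) (hμ : 0 < μ) (hl : ∀ j, μ ≤ l j)
    (hR : R ∈ Icc 0 1) :
    ‖∫ x in (0 : ℝ)..R, muntzSeries c l x / x‖ ≤ (∑' j, |c j|) * (R ^ μ / μ) := by
  rw [← integral_rpow_sub_one hμ, ← intervalIntegral.integral_const_mul]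
  refine intervalIntegral.norm_integral_le_of_norm_le hR.1 (.of_forall fun x hx ↦ ?_)
    ((intervalIntegral.intervalIntegrable_rpow' (by linarith)).const_mul _)
  exact norm_muntzSeries_div_le hc hl ⟨hx.1, hx.2.trans hR.2⟩

/-- The series `∑ⱼ cⱼ (x ^ β - x ^ lⱼ)`, which compares the Müntz series with coefficients `cⱼ` and
exponents `lⱼ` to the single power `(∑ⱼ cⱼ) x ^ β`. -/
noncomputable def muntzDiff (c l : ι → ℝ) (β x : ℝ) : ℝ := ∑' j, c j * (x ^ β - x ^ l j)

lemma hasSum_mul_rpow_sub_rpow (hc : Summable c) (hl : ∀ j, μ ≤ l j) (β : ℝ) (hx : x ∈ Ioc 0 1) :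
    HasSum (fun j ↦ c j * (x ^ β - x ^ l j)) ((∑' j, c j) * x ^ β - muntzSeries c l x) := by
  simpa only [mul_sub, muntzSeries] using
    (hc.hasSum.mul_right (x ^ β)).sub (summable_mul_rpow hc hl hx).hasSum

lemma eqOn_muntzDiff_div (hc : Summable c) (hl : ∀ j, μ ≤ l j) (β : ℝ) :
    EqOn (fun x ↦ muntzDiff c l β x / x)
      (fun x ↦ (∑' j, c j) * x ^ (β - 1) - muntzSeries c l x / x) (Ioc 0 1) := fun x hx ↦ by
  dsimp only
  rw [muntzDiff, (hasSum_mul_rpow_sub_rpow hc hl β hx).tsum_eq, sub_div, mul_div_assoc,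
    Real.rpow_sub_one hx.1.ne']

lemma intervalIntegrable_muntzDiff_div (hc : Summable c) (hβ : 0 < β) (hμ : 0 < μ)
    (hl : ∀ j, μ ≤ l j) (hR : R ∈ Icc 0 1) :
    IntervalIntegrable (fun x ↦ muntzDiff c l β x / x) volume 0 R := by
  have hsub : uIoc 0 R ⊆ Ioc 0 1 := uIoc_of_le hR.1 ▸ Ioc_subset_Ioc_right hR.2
  refine IntervalIntegrable.congr ((eqOn_muntzDiff_div hc hl β).symm.mono hsub) ?_
  exact ((intervalIntegral.intervalIntegrable_rpow' (by linarith)).const_mul _).sub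
    (intervalIntegrable_muntzSeries_div hc hμ hl hR)

theorem norm_integral_muntzDiff_div_sub_le (hc : Summable c) (hβ : 0 < β)
    (hμ : 0 < μ) (hl : ∀ j, μ ≤ l j) (hR : R ∈ Icc 0 1) :
    ‖(∫ x in (0 : ℝ)..R, muntzDiff c l β x / x) - (∑' j, c j) * (R ^ β / β)‖ ≤
      (∑' j, |c j|) * (R ^ μ / μ) := by
  have hsub : uIoc 0 R ⊆ Ioc 0 1 := uIoc_of_le hR.1 ▸ Ioc_subset_Ioc_right hR.2
  rw [intervalIntegral.integral_congr_ae
      (.of_forall fun _ hx ↦ eqOn_muntzDiff_div hc hl β (hsub hx)),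
    intervalIntegral.integral_sub
      ((intervalIntegral.intervalIntegrable_rpow' (by linarith)).const_mul _)
      (intervalIntegrable_muntzSeries_div hc hμ hl hR),
    intervalIntegral.integral_const_mul, integral_rpow_sub_one hβ, sub_sub_cancel_left, norm_neg]
  exact norm_integral_muntzSeries_div_le hc hμ hl hR

end MuntzSeries

section Asymptotics

lemma isLittleO_rpow_rpow_nhdsGT_zero {p q : ℝ} (hpq : p < q) :
    (fun x : ℝ ↦ x ^ q) =o[𝓝[>] 0] fun x ↦ x ^ p := by
  have hlim : Tendsto (fun x : ℝ ↦ x ^ (q - p)) (𝓝[>] 0) (𝓝 0) := by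
    have h := (Real.continuous_rpow_const (sub_nonneg.2 hpq.le)).tendsto 0
    rw [Real.zero_rpow (sub_pos.2 hpq).ne'] at h
    exact h.mono_left nhdsWithin_le_nhds
  refine isLittleO_of_tendsto' ?_ (hlim.congr' ?_)
  · filter_upwards [self_mem_nhdsWithin] with x hx h
    exact absurd h (Real.rpow_pos_of_pos hx p).ne'
  · filter_upwards [self_mem_nhdsWithin] with x hx
    exact Real.rpow_sub hx q p

lemma eventually_one_sub_mul_le_of_isEquivalent {γ : Type*} {𝓕 : Filter γ} {f g : γ → ℝ}
    (hfg : f ~[𝓕] g) (hg : ∀ᶠ x in 𝓕, 0 ≤ g x) {ε : ℝ} (hε : 0 < ε) :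
    ∀ᶠ x in 𝓕, (1 - ε) * g x ≤ f x := by
  filter_upwards [hfg.isLittleO.def hε, hg] with x hx hgx
  rw [Real.norm_of_nonneg hgx] at hx
  have := (abs_le.1 hx).1
  simp only [Pi.sub_apply] at this
  linarith

end Asymptotics

section Sector

variable {α β b a : ℝ}

/-- The exponents `λⱼ = (2j+1)/α` of the harmonic functions `r ^ λⱼ cos (λⱼ θ)` that vanish on the
straight sides `θ = ± π α / 2` of a sector of opening `π α`. -/
noncomputable def sectorExponent (α : ℝ) (j : ℕ) : ℝ := (2 * (j : ℝ) + 1) / α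

/-- The coefficients `cⱼ = 1 / (λⱼ² - β²)` of the balayage density of a sector. -/
noncomputable def sectorCoeff (α β : ℝ) (j : ℕ) : ℝ := (sectorExponent α j ^ 2 - β ^ 2)⁻¹

/-- The density at distance `r` from the vertex of the balayage `ν_b` of `|w| ^ (2b - 2) d²w` along
either straight side of the sector of opening `π α` and radius `a ^ α`. -/
noncomputable def balayageDensity (α b a r : ℝ) : ℝ :=
  (4 * a ^ (2 * α * b) / (α * Real.pi * r)) *
    ∑' j : ℕ, ((r / a ^ α) ^ (2 * b) - (r / a ^ α) ^ ((2 * (j : ℝ) + 1) / α)) /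
      (((2 * (j : ℝ) + 1) / α) ^ 2 - (2 * b) ^ 2)

/-- The balayage mass `F(R) = ν_b(∂S ∩ B_R(0))`; the factor `2` counts the two straight sides. -/
noncomputable def balayageMass (α b a R : ℝ) : ℝ := 2 * ∫ r in (0 : ℝ)..R, balayageDensity α b a r

lemma one_div_le_sectorExponent (hα : 0 < α) (j : ℕ) : 1 / α ≤ sectorExponent α j := by
  rw [sectorExponent]
  gcongr
  linarith [j.cast_nonneg (α := ℝ)]

lemma sectorCoeff_nonneg (hα : 0 < α) (hβ : 0 ≤ β) (hβα : β ≤ 1 / α) (j : ℕ) :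
    0 ≤ sectorCoeff α β j := by
  have hle : β ≤ sectorExponent α j := hβα.trans (one_div_le_sectorExponent hα j)
  exact inv_nonneg.2 (sub_nonneg.2 (pow_le_pow_left₀ hβ hle 2))

lemma sectorCoeff_eq (hα : α ≠ 0) (β : ℝ) (j : ℕ) :
    sectorCoeff α β j = α ^ 2 * ((2 * (j : ℝ) + 1) ^ 2 - (α * β) ^ 2)⁻¹ := by
  have hden : sectorExponent α j ^ 2 - β ^ 2 =
      ((2 * (j : ℝ) + 1) ^ 2 - (α * β) ^ 2) / α ^ 2 := by
    rw [sectorExponent]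
    field_simp
  rw [sectorCoeff, hden, inv_div, div_eq_mul_inv]

theorem hasSum_sectorCoeff (hα : α ≠ 0) (hαβ : ∀ n : ℤ, (n : ℝ) ≠ α * β) :
    HasSum (sectorCoeff α β) (α * Real.pi * Real.tan (Real.pi * (α * β) / 2) / (4 * β)) := by
  have hvalue : α * Real.pi * Real.tan (Real.pi * (α * β) / 2) / (4 * β) =
      α ^ 2 * (Real.pi * Real.tan (Real.pi * (α * β) / 2) / (4 * (α * β))) := by
    field_simp
  rw [hvalue, funext (sectorCoeff_eq hα β)]
  exact (real_hasSum_inv_odd_sq_sub_sq hαβ).mul_left (α ^ 2)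

lemma hasSum_sectorCoeff_of_lt (hα : 0 < α) (hb : 0 < b) (h2b : 2 * b < 1 / α) :
    HasSum (sectorCoeff α (2 * b)) (α * Real.pi * Real.tan (Real.pi * α * b) / (8 * b)) := by
  have hlt : α * (2 * b) < 1 := by rwa [lt_div_iff₀' hα] at h2b
  have hpos : 0 < α * (2 * b) := by positivity
  have hint : ∀ n : ℤ, (n : ℝ) ≠ α * (2 * b) := by
    rintro n hn
    rw [← hn] at hlt hpos
    have : n < 1 := mod_cast hlt
    have : 0 < n := mod_cast hpos
    lia
  convert hasSum_sectorCoeff hα.ne' hint using 1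
  ring_nf

lemma rpow_sub_rpow_div_eq_sectorCoeff_mul (α b x : ℝ) (j : ℕ) :
    (x ^ (2 * b) - x ^ ((2 * (j : ℝ) + 1) / α)) / (((2 * (j : ℝ) + 1) / α) ^ 2 - (2 * b) ^ 2) =
      sectorCoeff α (2 * b) j * (x ^ (2 * b) - x ^ sectorExponent α j) :=
  div_eq_inv_mul _ _

lemma balayageDensity_eq (ha : 0 < a) (α b r : ℝ) :
    balayageDensity α b a r = 4 * a ^ (2 * α * b) / (α * Real.pi) * ((a ^ α)⁻¹ *
      (muntzDiff (sectorCoeff α (2 * b)) (sectorExponent α) (2 * b) (r / a ^ α) /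
        (r / a ^ α))) := by
  simp only [balayageDensity, rpow_sub_rpow_div_eq_sectorCoeff_mul, muntzDiff]
  field_simp

lemma div_rpow_mem_Icc (ha : 0 < a) {R : ℝ} (hR : R ∈ Icc 0 (a ^ α)) : R / a ^ α ∈ Icc 0 1 :=
  have hA : 0 < a ^ α := Real.rpow_pos_of_pos ha α
  ⟨div_nonneg hR.1 hA.le, (div_le_one hA).2 hR.2⟩

lemma intervalIntegrable_balayageDensity (hα : 0 < α) (hb : 0 < b) (h2b : 2 * b < 1 / α)
    (ha : 0 < a) {R : ℝ} (hR : R ∈ Icc 0 (a ^ α)) :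
    IntervalIntegrable (balayageDensity α b a) volume 0 R := by
  have hA : a ^ α ≠ 0 := (Real.rpow_pos_of_pos ha α).ne'
  have hunit := intervalIntegrable_muntzDiff_div
    (hasSum_sectorCoeff_of_lt hα hb h2b).summable (β := 2 * b) (by positivity) (one_div_pos.2 hα)
    (one_div_le_sectorExponent hα) (div_rpow_mem_Icc ha hR)
  have hscaled := hunit.comp_mul_left (c := (a ^ α)⁻¹)
  simp only [div_inv_eq_mul, zero_mul, div_mul_cancel₀ R hA, inv_mul_eq_div] at hscaled
  rw [funext (balayageDensity_eq ha α b)]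
  exact (hscaled.const_mul _).const_mul _

lemma balayageMass_eq (ha : 0 < a) (α b R : ℝ) :
    balayageMass α b a R = 8 * a ^ (2 * α * b) / (α * Real.pi) * ∫ x in (0 : ℝ)..R / a ^ α,
      muntzDiff (sectorCoeff α (2 * b)) (sectorExponent α) (2 * b) x / x := by
  simp only [balayageMass, balayageDensity_eq ha]
  have hscale := intervalIntegral.inv_mul_integral_comp_div (a := 0) (b := R) (c := a ^ α)
    (f := fun x ↦ muntzDiff (sectorCoeff α (2 * b)) (sectorExponent α) (2 * b) x / x)
  rw [intervalIntegral.integral_const_mul, intervalIntegral.integral_const_mul, hscale, zero_div]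
  ring

lemma div_rpow_rpow_inv (hα : α ≠ 0) (ha : 0 < a) {R : ℝ} (hR : 0 ≤ R) :
    (R / a ^ α) ^ (1 / α) = R ^ (1 / α) / a := by
  rw [Real.div_rpow hR (Real.rpow_nonneg ha.le α), one_div, Real.rpow_rpow_inv ha.le hα]

lemma div_rpow_rpow_two_mul (ha : 0 < a) (α b : ℝ) {R : ℝ} (hR : 0 ≤ R) :
    (R / a ^ α) ^ (2 * b) = R ^ (2 * b) / a ^ (2 * α * b) := by
  rw [Real.div_rpow hR (Real.rpow_nonneg ha.le α), ← Real.rpow_mul ha.le,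
    mul_left_comm, ← mul_assoc]

theorem abs_balayageMass_sub_le (hα : 0 < α) (hb : 0 < b) (h2b : 2 * b < 1 / α) (ha : 0 < a)
    {R : ℝ} (hR : R ∈ Icc 0 (a ^ α)) :
    |balayageMass α b a R - Real.tan (Real.pi * α * b) / (2 * b ^ 2) * R ^ (2 * b)| ≤
      α * Real.tan (Real.pi * α * b) / b * a ^ (2 * α * b - 1) * R ^ (1 / α) := by
  have hsum := hasSum_sectorCoeff_of_lt hα hb h2b
  have hbound := norm_integral_muntzDiff_div_sub_le hsum.summable
    (show 0 < 2 * b by positivity) (one_div_pos.2 hα) (one_div_le_sectorExponent hα)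
    (div_rpow_mem_Icc ha hR)
  simp only [abs_of_nonneg (sectorCoeff_nonneg hα (by positivity : 0 ≤ 2 * b) h2b.le _),
    hsum.tsum_eq, div_rpow_rpow_inv hα.ne' ha hR.1, div_rpow_rpow_two_mul ha α b hR.1] at hbound
  have hmass := balayageMass_eq ha α b R
  set I := ∫ x in (0 : ℝ)..R / a ^ α,
    muntzDiff (sectorCoeff α (2 * b)) (sectorExponent α) (2 * b) x / x
  set T := Real.tan (Real.pi * α * b)
  have hK : 0 ≤ 8 * a ^ (2 * α * b) / (α * Real.pi) := by positivity
  calc |balayageMass α b a R - T / (2 * b ^ 2) * R ^ (2 * b)|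
      = 8 * a ^ (2 * α * b) / (α * Real.pi) * |I - α * Real.pi * T / (8 * b) *
          (R ^ (2 * b) / a ^ (2 * α * b) / (2 * b))| := by
        nth_rw 1 [← abs_of_nonneg hK]
        rw [← abs_mul, hmass]
        congr 1
        field_simp
    _ ≤ 8 * a ^ (2 * α * b) / (α * Real.pi) * (α * Real.pi * T / (8 * b) *
          (R ^ (1 / α) / a / (1 / α))) := mul_le_mul_of_nonneg_left hbound hK
    _ = α * T / b * a ^ (2 * α * b - 1) * R ^ (1 / α) := by
        rw [Real.rpow_sub_one ha.ne']
        field_simp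

lemma tan_pi_mul_pos (hα : 0 < α) (hb : 0 < b) (h2b : 2 * b < 1 / α) :
    0 < Real.tan (Real.pi * α * b) := by
  have hlt : 2 * b * α < 1 := (lt_div_iff₀ hα).1 h2b
  refine Real.tan_pos_of_pos_of_lt_pi_div_two (by positivity) ?_
  nlinarith [Real.pi_pos]

theorem balayageMass_isEquivalent (hα : 0 < α) (hb : 0 < b) (h2b : 2 * b < 1 / α) (ha : 0 < a) :
    balayageMass α b a ~[𝓝[>] 0]
      fun R ↦ Real.tan (Real.pi * α * b) / (2 * b ^ 2) * R ^ (2 * b) := by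
  have hconst : Real.tan (Real.pi * α * b) / (2 * b ^ 2) ≠ 0 :=
    (div_pos (tan_pi_mul_pos hα hb h2b) (by positivity)).ne'
  refine IsBigO.trans_isLittleO (.of_bound
    (α * Real.tan (Real.pi * α * b) / b * a ^ (2 * α * b - 1)) ?_)
    ((isLittleO_rpow_rpow_nhdsGT_zero h2b).const_mul_right hconst)
  filter_upwards [Ioo_mem_nhdsGT (Real.rpow_pos_of_pos ha α)] with R hR
  rw [Real.norm_of_nonneg (Real.rpow_nonneg hR.1.le (1 / α))]
  exact abs_balayageMass_sub_le hα hb h2b ha (Ioo_subset_Icc_self hR)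

end Sector

theorem stmt_10_general (α b a : ℝ) (hα : 0 < α) (hb : 0 < b) (h2b : 2 * b < 1 / α) (ha : 0 < a) :
    (∀ r ∈ Ioo (0 : ℝ) (a ^ α),
      Summable (fun j : ℕ =>
        ((r / a ^ α) ^ (2 * b) - (r / a ^ α) ^ ((2 * (j : ℝ) + 1) / α)) /
          (((2 * (j : ℝ) + 1) / α) ^ 2 - (2 * b) ^ 2))) ∧
    (∀ R ∈ Ioo (0 : ℝ) (a ^ α), IntervalIntegrable (balayageDensity α b a) volume 0 R) ∧
    (∃ C > (0 : ℝ), ∃ Rb ∈ Ioo (0 : ℝ) (a ^ α), ∀ R ∈ Ioo (0 : ℝ) Rb,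
      |balayageMass α b a R - Real.tan (Real.pi * α * b) / (2 * b ^ 2) * R ^ (2 * b)| ≤
        C * R ^ (1 / α)) ∧
    (∀ ε > (0 : ℝ), ∃ Rb' > (0 : ℝ), ∀ R ∈ Ioo (0 : ℝ) Rb',
      balayageMass α b a R ≥
        (1 - ε) * (Real.tan (Real.pi * α * b) / (2 * b ^ 2)) * R ^ (2 * b)) := by
  have hA : 0 < a ^ α := Real.rpow_pos_of_pos ha α
  have hT : 0 < Real.tan (Real.pi * α * b) := tan_pi_mul_pos hα hb h2b
  refine ⟨fun r hr ↦ ?_, fun R hR ↦ ?_, ?_, fun ε hε ↦ ?_⟩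
  · simp only [rpow_sub_rpow_div_eq_sectorCoeff_mul]
    exact (hasSum_mul_rpow_sub_rpow (hasSum_sectorCoeff_of_lt hα hb h2b).summable
      (one_div_le_sectorExponent hα) (2 * b) ⟨div_pos hr.1 hA, (div_le_one hA).2 hr.2.le⟩).summable
  · exact intervalIntegrable_balayageDensity hα hb h2b ha (Ioo_subset_Icc_self hR)
  · exact ⟨_, by positivity, a ^ α / 2, ⟨half_pos hA, half_lt_self hA⟩, fun R hR ↦
      abs_balayageMass_sub_le hα hb h2b ha ⟨hR.1.le, hR.2.le.trans (half_le_self hA.le)⟩⟩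
  · have hmain : ∀ᶠ R in 𝓝[>] (0 : ℝ),
        0 ≤ Real.tan (Real.pi * α * b) / (2 * b ^ 2) * R ^ (2 * b) := by
      filter_upwards [self_mem_nhdsWithin] with R (hR : 0 < R)
      positivity
    obtain ⟨Rb', hRb', hle⟩ := mem_nhdsGT_iff_exists_Ioo_subset.1
      (eventually_one_sub_mul_le_of_isEquivalent (balayageMass_isEquivalent hα hb h2b ha) hmain hε)
    exact ⟨Rb', hRb', fun R hR ↦ (mul_assoc _ _ _).trans_le (hle hR)⟩

/-- for `0 < α ≤ 2`, `b > 0` with `2b < 1/α`, and `a > 0`, the explicit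
balayage mass `F(R)` of the sector satisfies: the series converges for `r ∈ (0, a^α)`,
the integral is finite, `|F(R) − (tan(παb)/(2b²)) R^{2b}| ≤ C R^{1/α}` for small `R`,
and for every `ε > 0`, `F(R) ≥ (1−ε)(tan(παb)/(2b²)) R^{2b}` for all small `R`. -/
theorem stmt_10 (α b a : ℝ) (hα0 : 0 < α) (hα2 : α ≤ 2) (hb : 0 < b) (h2b : 2 * b < 1 / α)
    (ha : 0 < a) (F : ℝ → ℝ)
    (hF : ∀ R : ℝ, F R = 2 * ∫ r in (0:ℝ)..R,
      (4 * a ^ (2 * α * b) / (α * Real.pi * r)) *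
        ∑' j : ℕ, ((r / a ^ α) ^ (2 * b) - (r / a ^ α) ^ ((2 * (j:ℝ) + 1) / α)) /
          (((2 * (j:ℝ) + 1) / α) ^ 2 - (2 * b) ^ 2)) :
    (∀ r ∈ Ioo (0:ℝ) (a ^ α),
      Summable (fun j : ℕ =>
        ((r / a ^ α) ^ (2 * b) - (r / a ^ α) ^ ((2 * (j:ℝ) + 1) / α)) /
          (((2 * (j:ℝ) + 1) / α) ^ 2 - (2 * b) ^ 2))) ∧
    (∀ R ∈ Ioo (0:ℝ) (a ^ α),
      IntervalIntegrable (fun r : ℝ =>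
        (4 * a ^ (2 * α * b) / (α * Real.pi * r)) *
          ∑' j : ℕ, ((r / a ^ α) ^ (2 * b) - (r / a ^ α) ^ ((2 * (j:ℝ) + 1) / α)) /
            (((2 * (j:ℝ) + 1) / α) ^ 2 - (2 * b) ^ 2))
        MeasureTheory.volume 0 R) ∧
    (∃ C > (0:ℝ), ∃ Rb ∈ Ioo (0:ℝ) (a ^ α), ∀ R ∈ Ioo (0:ℝ) Rb,
      |F R - Real.tan (Real.pi * α * b) / (2 * b ^ 2) * R ^ (2 * b)| ≤ C * R ^ (1 / α)) ∧
    (∀ ε > (0:ℝ), ∃ Rb' > (0:ℝ), ∀ R ∈ Ioo (0:ℝ) Rb',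
      F R ≥ (1 - ε) * (Real.tan (Real.pi * α * b) / (2 * b ^ 2)) * R ^ (2 * b)) := by
  obtain rfl : F = balayageMass α b a := funext hF
  exact stmt_10_general α b a hα0 hb h2b ha
end
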